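/- arXiv:1106.2213 — 3 statements merged into one kernel-verified Lean document; each statement's English description precedes it below -/
import Mathlib

section
/- Let 𝔼 : M_n(ℂ) → M_m(ℂ) be a sub-unital positive linear map, let g be a non-negative convex function on [0,∞) with g(0) = 0, let Z be an n×n positive semidefinite matrix, and let q ≥ 1. Then there exists a unitary V ∈ M_m(ℂ) such that g(𝔼_q(Z)) ≤ V 𝔼_q(g(Z)) V* in the positive semidefinite (Loewner) order, where 𝔼_q(Z) := (𝔼(Z^q))^{1/q}. -/
open scoped ComplexOrder

section Defs

variable {n : ℕ}

/-- eigenvalues of a Hermitian matrix listed in increasing order -/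
noncomputable def eigUp {A : Matrix (Fin n) (Fin n) ℂ} (hA : A.IsHermitian) : Fin n → ℝ :=
  fun i => hA.eigenvalues (Tuple.sort hA.eigenvalues i)

/-- eigenvalues of a Hermitian matrix listed in decreasing order: `eigDown hA i = μ_{i+1}(A)` -/
noncomputable def eigDown {A : Matrix (Fin n) (Fin n) ℂ} (hA : A.IsHermitian) : Fin n → ℝ :=
  fun i => eigUp hA i.rev

/-- the product of the `k` smallest eigenvalues, `∏_{j=1}^k μ_{n+1-j}(A)` -/
noncomputable def prodSmall (A : Matrix (Fin n) (Fin n) ℂ) (k : ℕ) : ℝ :=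
  if hA : A.IsHermitian then
    ∏ i ∈ Finset.univ.filter (fun i : Fin n => (i : ℕ) < k), eigUp hA i
  else 0

/-- the product of the `k` largest eigenvalues, `∏_{j=1}^k μ_j(A)` -/
noncomputable def prodLarge (A : Matrix (Fin n) (Fin n) ℂ) (k : ℕ) : ℝ :=
  if hA : A.IsHermitian then
    ∏ i ∈ Finset.univ.filter (fun i : Fin n => (i : ℕ) < k), eigDown hA i
  else 0

/-- the sum of the `k` smallest eigenvalues, `∑_{j=1}^k μ_{n+1-j}(A)` -/
noncomputable def sumSmall (A : Matrix (Fin n) (Fin n) ℂ) (k : ℕ) : ℝ :=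
  if hA : A.IsHermitian then
    ∑ i ∈ Finset.univ.filter (fun i : Fin n => (i : ℕ) < k), eigUp hA i
  else 0

/-- A doubly concave function on an interval `Ω ⊆ [0,∞)`. -/
structure DoublyConcaveOn (f : ℝ → ℝ) (Ω : Set ℝ) : Prop where
  subset_Ici : Ω ⊆ Set.Ici (0 : ℝ)
  nonneg : ∀ x ∈ Ω, 0 ≤ f x
  continuousOn : ContinuousOn f Ω
  concaveOn : ConcaveOn ℝ Ω f
  geomConcave : ∀ x ∈ Ω, ∀ y ∈ Ω, Real.sqrt (f x * f y) ≤ f (Real.sqrt (x * y))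

/-- `𝔼_p(Z) := (𝔼(Z^p))^{1/p}` -/
noncomputable def Ep {n m : ℕ} (E : Matrix (Fin n) (Fin n) ℂ →ₗ[ℂ] Matrix (Fin m) (Fin m) ℂ)
    (p : ℝ) (Z : Matrix (Fin n) (Fin n) ℂ) : Matrix (Fin m) (Fin m) ℂ :=
  cfc (fun x : ℝ => x ^ (1 / p)) (E (cfc (fun x : ℝ => x ^ p) Z))

/-- the power `p`-mean `A β_p B := ((A^p + B^p)/2)^{1/p}` -/
noncomputable def betaP (p : ℝ) (A B : Matrix (Fin n) (Fin n) ℂ) : Matrix (Fin n) (Fin n) ℂ :=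
  cfc (fun x : ℝ => x ^ (1 / p))
    ((2 : ℂ)⁻¹ • (cfc (fun x : ℝ => x ^ p) A + cfc (fun x : ℝ => x ^ p) B))

noncomputable def sqrtM (A : Matrix (Fin n) (Fin n) ℂ) : Matrix (Fin n) (Fin n) ℂ :=
  cfc Real.sqrt A

noncomputable def invSqrtM (A : Matrix (Fin n) (Fin n) ℂ) : Matrix (Fin n) (Fin n) ℂ :=
  cfc (fun x : ℝ => (Real.sqrt x)⁻¹) A

/-- operator mean with representing function `h`: `A σ B = A^{1/2} h(A^{-1/2} B A^{-1/2}) A^{1/2}` -/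
noncomputable def opMean (h : ℝ → ℝ) (A B : Matrix (Fin n) (Fin n) ℂ) :
    Matrix (Fin n) (Fin n) ℂ :=
  sqrtM A * cfc h (invSqrtM A * B * invSqrtM A) * sqrtM A

/-- the weighted geometric mean `A #_α B` -/
noncomputable def sharp (α : ℝ) (A B : Matrix (Fin n) (Fin n) ℂ) : Matrix (Fin n) (Fin n) ℂ :=
  sqrtM A * cfc (fun x : ℝ => x ^ α) (invSqrtM A * B * invSqrtM A) * sqrtM A

/-- the (real) determinant of a Hermitian matrix -/
noncomputable def rdet (A : Matrix (Fin n) (Fin n) ℂ) : ℝ := (A.det).re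

open Classical in
/-- the derived anti-norm `‖A‖_! = ‖A^{-p}‖^{-1/p}` for invertible positive `A`, `0` otherwise. -/
noncomputable def derivedAntiNorm (N : Matrix (Fin n) (Fin n) ℂ → ℝ) (p : ℝ)
    (A : Matrix (Fin n) (Fin n) ℂ) : ℝ :=
  if IsUnit A.det then (N (cfc (fun x : ℝ => x ^ (-p)) A)) ^ (-(1 / p)) else 0

end Defs

/-!
The eigenvalues of `𝔼(Z^q)` and `𝔼(g(Z)^q)` are compared index by index, a common unitary rotating
one eigenbasis onto the other. A dimension count gives, for each index `j`, a vector state `φ` with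
`μ_j(𝔼(Z^q)) ≤ φ(𝔼(Z^q))` and `φ(𝔼(g(Z)^q)) ≤ μ_j(𝔼(g(Z)^q))`. On functions of `Z` the positive
functional `φ ∘ 𝔼` is a sum over the eigenvalues of `Z` with weights of total mass at most one, so
the theorem reduces to the scalar inequality `g(‖x‖_q) ≤ ‖g(x)‖_q` for such weights. The latter
follows from a supporting line `a x - b ≤ g(x)` by Minkowski's inequality
`‖g(x) + b‖_q ≤ ‖g(x)‖_q + b`.
-/

open Matrix Set
open scoped MatrixOrder

section WeightedLp

variable {ι : Type*} [Fintype ι] {w x y : ι → ℝ} {p : ℝ}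

/-- The weighted `ℓ^p` norm `(∑ i, w i * x i ^ p) ^ (1 / p)` of a nonnegative function `x` with
respect to nonnegative weights `w`. No absolute values are taken. -/
noncomputable def weightedLp (w : ι → ℝ) (p : ℝ) (x : ι → ℝ) : ℝ :=
  (∑ i, w i * x i ^ p) ^ (1 / p)

theorem sum_mul_rpow_nonneg (hw : ∀ i, 0 ≤ w i) (hx : ∀ i, 0 ≤ x i) :
    0 ≤ ∑ i, w i * x i ^ p :=
  Finset.sum_nonneg fun i _ => mul_nonneg (hw i) (Real.rpow_nonneg (hx i) p)

theorem weightedLp_nonneg (hw : ∀ i, 0 ≤ w i) (hx : ∀ i, 0 ≤ x i) : 0 ≤ weightedLp w p x :=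
  Real.rpow_nonneg (sum_mul_rpow_nonneg hw hx) _

theorem weightedLp_mono (hp : 0 ≤ p) (hw : ∀ i, 0 ≤ w i) (hx : ∀ i, 0 ≤ x i)
    (hxy : ∀ i, x i ≤ y i) : weightedLp w p x ≤ weightedLp w p y := by
  refine Real.rpow_le_rpow (sum_mul_rpow_nonneg hw hx) ?_ (one_div_nonneg.2 hp)
  gcongr with i
  exacts [hw i, hx i, hxy i]

theorem weightedLp_const_mul {a : ℝ} (hp : p ≠ 0) (ha : 0 ≤ a) (hw : ∀ i, 0 ≤ w i)
    (hx : ∀ i, 0 ≤ x i) : weightedLp w p (fun i => a * x i) = a * weightedLp w p x := by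
  have hsum : ∑ i, w i * (a * x i) ^ p = a ^ p * ∑ i, w i * x i ^ p := by
    simp only [Real.mul_rpow ha (hx _), Finset.mul_sum, mul_left_comm]
  rw [weightedLp, hsum, Real.mul_rpow (Real.rpow_nonneg ha p) (sum_mul_rpow_nonneg hw hx),
    one_div, Real.rpow_rpow_inv ha hp, weightedLp, one_div]

theorem weightedLp_const_le {b : ℝ} (hp : 0 < p) (hw : ∀ i, 0 ≤ w i) (hw1 : ∑ i, w i ≤ 1)
    (hb : 0 ≤ b) : weightedLp w p (fun _ => b) ≤ b := by
  rw [weightedLp, ← Finset.sum_mul, one_div]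
  calc ((∑ i, w i) * b ^ p) ^ p⁻¹
      ≤ (b ^ p) ^ p⁻¹ :=
        Real.rpow_le_rpow (mul_nonneg (Finset.sum_nonneg fun i _ => hw i) (Real.rpow_nonneg hb p))
          (mul_le_of_le_one_left (Real.rpow_nonneg hb p) hw1) (inv_nonneg.2 hp.le)
    _ = b := Real.rpow_rpow_inv hb hp.ne'

theorem weightedLp_add_le (hp : 1 ≤ p) (hw : ∀ i, 0 ≤ w i) (hx : ∀ i, 0 ≤ x i)
    (hy : ∀ i, 0 ≤ y i) :
    weightedLp w p (fun i => x i + y i) ≤ weightedLp w p x + weightedLp w p y := by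
  have hw' (i) : 0 ≤ w i ^ p⁻¹ := Real.rpow_nonneg (hw i) _
  have absorb {z : ι → ℝ} (hz : ∀ i, 0 ≤ z i) (i : ι) : (w i ^ p⁻¹ * z i) ^ p = w i * z i ^ p := by
    rw [Real.mul_rpow (hw' i) (hz i), Real.rpow_inv_rpow (hw i) (by positivity)]
  have minkowski := Real.Lp_add_le_of_nonneg (s := Finset.univ) hp
    (fun i _ => mul_nonneg (hw' i) (hx i)) (fun i _ => mul_nonneg (hw' i) (hy i))
  simpa only [weightedLp, ← mul_add, absorb hx, absorb hy,
    absorb fun i => add_nonneg (hx i) (hy i)] using minkowski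

end WeightedLp

section Convex

theorem exists_add_mul_sub_le_of_mem_interior {s : Set ℝ} {f : ℝ → ℝ} {y : ℝ}
    (hf : ConvexOn ℝ s f) (hy : y ∈ interior s) :
    ∃ a, ∀ x ∈ s, f y + a * (x - y) ≤ f x := by
  refine ⟨derivWithin f (Ioi y) y, fun x hx => ?_⟩
  rcases lt_trichotomy x y with hxy | rfl | hxy
  · have hslope := (hf.slope_le_leftDeriv_of_mem_interior hx hy hxy).trans
      (hf.leftDeriv_le_rightDeriv_of_mem_interior hy)
    rw [slope_def_field, div_le_iff₀ (sub_pos.2 hxy)] at hslope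
    linarith
  · simp
  · have hslope := hf.rightDeriv_le_slope_of_mem_interior hy hx hxy
    rw [slope_def_field, le_div_iff₀ (sub_pos.2 hxy)] at hslope
    linarith

variable {g : ℝ → ℝ} (hg : ConvexOn ℝ (Ici 0) g) (hg_zero : g 0 = 0)
  (hg_nonneg : ∀ x, 0 ≤ x → 0 ≤ g x)

include hg hg_zero hg_nonneg

theorem exists_nonneg_mul_le_add {y : ℝ} (hy : 0 ≤ y) :
    ∃ a b : ℝ, 0 ≤ a ∧ 0 ≤ b ∧ a * y = g y + b ∧ ∀ x, 0 ≤ x → a * x ≤ g x + b := by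
  rcases hy.eq_or_lt with rfl | hy_pos
  · exact ⟨0, 0, le_rfl, le_rfl, by simp [hg_zero], by simpa using hg_nonneg⟩
  obtain ⟨a, ha⟩ := exists_add_mul_sub_le_of_mem_interior hg (y := y) (by simpa using hy_pos)
  have h_zero : g y ≤ a * y := by linarith [ha 0 self_mem_Ici]
  refine ⟨a, a * y - g y, nonneg_of_mul_nonneg_left ((hg_nonneg y hy).trans h_zero) hy_pos,
    sub_nonneg.2 h_zero, by ring, fun x hx => ?_⟩
  linarith [ha x hx]

theorem monotoneOn_Ici_of_convexOn_of_nonneg : MonotoneOn g (Ici 0) := by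
  intro x hx y hy hxy
  obtain ⟨a, b, ha, -, hx_eq, h_le⟩ := exists_nonneg_mul_le_add hg hg_zero hg_nonneg hx
  linarith [h_le y hy, mul_le_mul_of_nonneg_left hxy ha]

theorem map_weightedLp_le {ι : Type*} [Fintype ι] {w x : ι → ℝ} {p : ℝ} (hp : 1 ≤ p)
    (hw : ∀ i, 0 ≤ w i) (hw1 : ∑ i, w i ≤ 1) (hx : ∀ i, 0 ≤ x i) :
    g (weightedLp w p x) ≤ weightedLp w p (fun i => g (x i)) := by
  have hp_pos : 0 < p := by positivity
  have hgx (i) : 0 ≤ g (x i) := hg_nonneg _ (hx i)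
  obtain ⟨a, b, ha, hb, h_eq, h_le⟩ :=
    exists_nonneg_mul_le_add hg hg_zero hg_nonneg (weightedLp_nonneg (p := p) hw hx)
  rw [← add_le_add_iff_right b]
  calc g (weightedLp w p x) + b
      = weightedLp w p (fun i => a * x i) := by
        rw [← h_eq, weightedLp_const_mul hp_pos.ne' ha hw hx]
    _ ≤ weightedLp w p (fun i => g (x i) + b) :=
        weightedLp_mono hp_pos.le hw (fun i => mul_nonneg ha (hx i)) fun i => h_le _ (hx i)
    _ ≤ weightedLp w p (fun i => g (x i)) + weightedLp w p (fun _ => b) :=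
        weightedLp_add_le hp hw hgx fun _ => hb
    _ ≤ weightedLp w p (fun i => g (x i)) + b := by
        gcongr
        exact weightedLp_const_le hp_pos hw hw1 hb

end Convex

section Hermitian

variable {𝕜 ι : Type*} [RCLike 𝕜] [Fintype ι] [DecidableEq ι] {A B : Matrix ι ι 𝕜}

theorem cfc_cfc_of_isHermitian (hA : A.IsHermitian) (f h : ℝ → ℝ) :
    cfc f (cfc h A) = cfc (fun x => f (h x)) A :=
  (cfc_comp' f h A ((A.finite_real_spectrum.image h).continuousOn f)
    (A.finite_real_spectrum.continuousOn h) hA.isSelfAdjoint).symm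

theorem posSemidef_cfc {f : ℝ → ℝ} (hA : A.PosSemidef) (hf : ∀ x, 0 ≤ x → 0 ≤ f x) :
    (cfc f A).PosSemidef :=
  nonneg_iff_posSemidef.1 <| cfc_nonneg fun _ hx => hf _ <| spectrum_nonneg_of_nonneg hA.nonneg hx

/-- The orthogonal projection onto the line spanned by the `i`-th vector of the chosen eigenbasis
of a Hermitian matrix. -/
noncomputable def eigenProj (hA : A.IsHermitian) (i : ι) : Matrix ι ι 𝕜 :=
  vecMulVec (hA.eigenvectorBasis i) (star ⇑(hA.eigenvectorBasis i))

theorem eigenProj_nonneg (hA : A.IsHermitian) (i : ι) : 0 ≤ eigenProj hA i :=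
  (posSemidef_vecMulVec_self_star _).nonneg

theorem cfc_eq_conjStarAlgAut_diagonal (hA : A.IsHermitian) (f : ℝ → ℝ) :
    cfc f A = Unitary.conjStarAlgAut 𝕜 _ hA.eigenvectorUnitary
      (diagonal fun i => (f (hA.eigenvalues i) : 𝕜)) :=
  hA.cfc_eq f

theorem cfc_eq_sum_smul_eigenProj (hA : A.IsHermitian) (f : ℝ → ℝ) :
    cfc f A = ∑ i, f (hA.eigenvalues i) • eigenProj hA i := by
  ext j k
  rw [cfc_eq_conjStarAlgAut_diagonal hA, Unitary.conjStarAlgAut_apply, mul_apply, Matrix.sum_apply]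
  refine Finset.sum_congr rfl fun i _ => ?_
  simp only [mul_diagonal, Matrix.smul_apply, eigenProj, vecMulVec_apply, star_apply, Pi.star_apply,
    IsHermitian.eigenvectorUnitary_apply, RCLike.real_smul_eq_coe_mul]
  ring

theorem exists_unitary_cfc_le_of_forall_eigenvalues (hA : A.IsHermitian) (hB : B.IsHermitian)
    {f h : ℝ → ℝ} (hfh : ∀ i, f (hA.eigenvalues i) ≤ h (hB.eigenvalues i)) :
    ∃ V ∈ unitaryGroup ι 𝕜, cfc f A ≤ V * cfc h B * star V := by
  set U := hA.eigenvectorUnitary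
  set W := hB.eigenvectorUnitary
  refine ⟨_, (U * star W).2, ?_⟩
  have h_conj : ((U * star W : unitaryGroup ι 𝕜) : Matrix ι ι 𝕜) * cfc h B *
      star ((U * star W : unitaryGroup ι 𝕜) : Matrix ι ι 𝕜) =
      Unitary.conjStarAlgAut 𝕜 _ U (diagonal fun i => (h (hB.eigenvalues i) : 𝕜)) := by
    rw [cfc_eq_conjStarAlgAut_diagonal hB, ← Unitary.conjStarAlgAut_apply (S := 𝕜),
      ← Unitary.conjStarAlgAut_mul_apply, mul_assoc, Unitary.star_mul_self, mul_one]
  rw [h_conj, cfc_eq_conjStarAlgAut_diagonal hA]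
  refine OrderHomClass.mono _ ?_
  rw [le_iff, diagonal_sub]
  exact PosSemidef.diagonal fun i => sub_nonneg.2 <| RCLike.ofReal_le_ofReal.2 (hfh i)

end Hermitian

section PositiveFunctional

variable {𝕜 ι : Type*} [RCLike 𝕜] [Fintype ι] [DecidableEq ι] {A B Z : Matrix ι ι 𝕜}

theorem map_cfc_eq_sum (φ : Matrix ι ι 𝕜 →ₚ[ℝ] ℝ) (hA : A.IsHermitian) (f : ℝ → ℝ) :
    φ (cfc f A) = ∑ i, φ (eigenProj hA i) * f (hA.eigenvalues i) := by
  simp only [cfc_eq_sum_smul_eigenProj hA, map_sum, map_smul, smul_eq_mul, mul_comm]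

theorem map_eq_sum_eigenProj (φ : Matrix ι ι 𝕜 →ₚ[ℝ] ℝ) (hA : A.IsHermitian) :
    φ A = ∑ i, φ (eigenProj hA i) * hA.eigenvalues i := by
  simpa only [id, cfc_id ℝ A hA.isSelfAdjoint] using map_cfc_eq_sum φ hA id

theorem sum_map_eigenProj (φ : Matrix ι ι 𝕜 →ₚ[ℝ] ℝ) (hA : A.IsHermitian) :
    ∑ i, φ (eigenProj hA i) = φ 1 := by
  simpa only [mul_one, cfc_const_one ℝ A hA.isSelfAdjoint] using
    (map_cfc_eq_sum φ hA fun _ => 1).symm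

theorem map_functional_cfc_rpow_le {g : ℝ → ℝ} (hg : ConvexOn ℝ (Ici 0) g) (hg_zero : g 0 = 0)
    (hg_nonneg : ∀ x, 0 ≤ x → 0 ≤ g x) {q : ℝ} (hq : 1 ≤ q) (φ : Matrix ι ι 𝕜 →ₚ[ℝ] ℝ)
    (hφ : φ 1 ≤ 1) (hZ : Z.PosSemidef) :
    g (φ (cfc (fun x : ℝ => x ^ q) Z) ^ (1 / q)) ≤ φ (cfc (fun x => g x ^ q) Z) ^ (1 / q) := by
  simp only [map_cfc_eq_sum φ hZ.1]
  exact map_weightedLp_le hg hg_zero hg_nonneg hq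
    (fun i => map_nonneg φ (eigenProj_nonneg hZ.1 i)) ((sum_map_eigenProj φ hZ.1).trans_le hφ)
    hZ.eigenvalues_nonneg

theorem le_map_of_map_eigenProj_eq_zero {φ : Matrix ι ι 𝕜 →ₚ[ℝ] ℝ} (hφ : φ 1 = 1)
    (hA : A.IsHermitian) {c : ℝ} (h : ∀ i, hA.eigenvalues i < c → φ (eigenProj hA i) = 0) :
    c ≤ φ A := by
  rw [map_eq_sum_eigenProj φ hA, ← one_mul c, ← hφ, ← sum_map_eigenProj φ hA, Finset.sum_mul]
  refine Finset.sum_le_sum fun i _ => ?_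
  rcases lt_or_ge (hA.eigenvalues i) c with hi | hi
  · simp [h i hi]
  · exact mul_le_mul_of_nonneg_left hi (map_nonneg φ (eigenProj_nonneg hA i))

theorem map_le_of_map_eigenProj_eq_zero {φ : Matrix ι ι 𝕜 →ₚ[ℝ] ℝ} (hφ : φ 1 = 1)
    (hA : A.IsHermitian) {c : ℝ} (h : ∀ i, c < hA.eigenvalues i → φ (eigenProj hA i) = 0) :
    φ A ≤ c := by
  rw [map_eq_sum_eigenProj φ hA, ← one_mul c, ← hφ, ← sum_map_eigenProj φ hA, Finset.sum_mul]
  refine Finset.sum_le_sum fun i _ => ?_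
  rcases lt_or_ge c (hA.eigenvalues i) with hi | hi
  · simp [h i hi]
  · exact mul_le_mul_of_nonneg_left hi (map_nonneg φ (eigenProj_nonneg hA i))

end PositiveFunctional

theorem exists_ne_zero_forall_ne_dotProduct_eq_zero {R ι : Type*} [CommRing R] [IsDomain R]
    [Fintype ι] (b : ι → ι → R) (j : ι) : ∃ v ≠ 0, ∀ i ≠ j, b i ⬝ᵥ v = 0 := by
  classical
  have h_det : (of (Function.update b j 0)).det = 0 :=
    det_eq_zero_of_row_eq_zero j fun k => by simp
  obtain ⟨v, hv, hMv⟩ := exists_mulVec_eq_zero_iff.2 h_det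
  refine ⟨v, hv, fun i hi => ?_⟩
  simpa [mulVec, hi] using congrFun hMv i

section Rayleigh

variable {𝕜 ι : Type*} [RCLike 𝕜] [Fintype ι]

/-- The Rayleigh quotient `⟨v, A v⟩ / ⟨v, v⟩` as a positive functional of the matrix `A`: the
vector state of `v`. It is zero for `v = 0`. -/
noncomputable def rayleigh (v : ι → 𝕜) : Matrix ι ι 𝕜 →ₚ[ℝ] ℝ :=
  PositiveLinearMap.mk₀
    { toFun := fun A => RCLike.re (star v ⬝ᵥ A *ᵥ v) / RCLike.re (star v ⬝ᵥ v)
      map_add' := fun A B => by rw [add_mulVec, dotProduct_add, map_add, add_div]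
      map_smul' := fun r A => by
        rw [smul_mulVec, dotProduct_smul, RCLike.smul_re, mul_div_assoc, smul_eq_mul,
          RingHom.id_apply] }
    fun _ hA => div_nonneg ((nonneg_iff_posSemidef.1 hA).re_dotProduct_nonneg v)
      (RCLike.nonneg_iff.1 (dotProduct_star_self_nonneg v)).1

theorem rayleigh_apply (v : ι → 𝕜) (A : Matrix ι ι 𝕜) :
    rayleigh v A = RCLike.re (star v ⬝ᵥ A *ᵥ v) / RCLike.re (star v ⬝ᵥ v) :=
  rfl

theorem rayleigh_vecMulVec_eq_zero {u v : ι → 𝕜} (huv : star u ⬝ᵥ v = 0) :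
    rayleigh v (vecMulVec u (star u)) = 0 := by
  simp [rayleigh_apply, vecMulVec_mulVec, huv]

variable [DecidableEq ι]

theorem rayleigh_one {v : ι → 𝕜} (hv : v ≠ 0) : rayleigh v 1 = 1 := by
  rw [rayleigh_apply, one_mulVec]
  exact div_self (RCLike.pos_iff.1 (dotProduct_star_self_pos_iff.2 hv)).1.ne'

theorem exists_state_eigenvalues_le_map_le {A B : Matrix ι ι 𝕜} (hA : A.IsHermitian)
    (hB : B.IsHermitian) (j : ι) :
    ∃ φ : Matrix ι ι 𝕜 →ₚ[ℝ] ℝ, φ 1 = 1 ∧ hA.eigenvalues j ≤ φ A ∧ φ B ≤ hB.eigenvalues j := by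
  let index : ι → Fin (Fintype.card ι) := (Fintype.equivOfCardEq (Fintype.card_fin _)).symm
  have index_lt_of_lt {C : Matrix ι ι 𝕜} (hC : C.IsHermitian) {i k : ι}
      (h : hC.eigenvalues i < hC.eigenvalues k) : index k < index i :=
    hC.eigenvalues₀_antitone.reflect_lt h
  obtain ⟨v, hv, h_orth⟩ := exists_ne_zero_forall_ne_dotProduct_eq_zero
    (fun i => if index i < index j then star ⇑(hB.eigenvectorBasis i)
      else star ⇑(hA.eigenvectorBasis i)) j
  have hφ := rayleigh_one hv
  refine ⟨rayleigh v, hφ, le_map_of_map_eigenProj_eq_zero hφ hA fun i hi => ?_,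
    map_le_of_map_eigenProj_eq_zero hφ hB fun i hi => ?_⟩
  all_goals
    have h_ne : i ≠ j := by rintro rfl; exact hi.false
    apply rayleigh_vecMulVec_eq_zero
  · simpa [(index_lt_of_lt hA hi).not_gt] using h_orth i h_ne
  · simpa [index_lt_of_lt hB hi] using h_orth i h_ne

theorem exists_unitary_cfc_le_of_forall_state {A B : Matrix ι ι 𝕜} (hA : A.PosSemidef)
    (hB : B.PosSemidef) {f h : ℝ → ℝ} (hf : MonotoneOn f (Ici 0)) (hh : MonotoneOn h (Ici 0))
    (hfh : ∀ φ : Matrix ι ι 𝕜 →ₚ[ℝ] ℝ, φ 1 = 1 → f (φ A) ≤ h (φ B)) :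
    ∃ V ∈ unitaryGroup ι 𝕜, cfc f A ≤ V * cfc h B * star V := by
  refine exists_unitary_cfc_le_of_forall_eigenvalues hA.1 hB.1 fun j => ?_
  obtain ⟨φ, hφ, hφA, hφB⟩ := exists_state_eigenvalues_le_map_le hA.1 hB.1 j
  calc f (hA.1.eigenvalues j)
      ≤ f (φ A) := hf (hA.eigenvalues_nonneg j) (map_nonneg φ hA.nonneg) hφA
    _ ≤ h (φ B) := hfh φ hφ
    _ ≤ h (hB.1.eigenvalues j) := hh (map_nonneg φ hB.nonneg) (hB.eigenvalues_nonneg j) hφB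

end Rayleigh

theorem stmt_5_general {𝕜 𝕜' ι κ : Type*} [RCLike 𝕜] [RCLike 𝕜'] [Fintype ι] [DecidableEq ι]
    [Fintype κ] [DecidableEq κ] (E : Matrix ι ι 𝕜 →ₚ[ℝ] Matrix κ κ 𝕜') (hE : E 1 ≤ 1)
    {g : ℝ → ℝ} (hg_zero : g 0 = 0) (hg_nonneg : ∀ x, 0 ≤ x → 0 ≤ g x)
    (hg : ConvexOn ℝ (Ici 0) g) {Z : Matrix ι ι 𝕜} (hZ : Z.PosSemidef) {q : ℝ} (hq : 1 ≤ q) :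
    ∃ V ∈ unitaryGroup κ 𝕜',
      cfc g (cfc (fun x : ℝ => x ^ (1 / q)) (E (cfc (fun x : ℝ => x ^ q) Z))) ≤
        V * cfc (fun x : ℝ => x ^ (1 / q)) (E (cfc (fun x : ℝ => x ^ q) (cfc g Z))) * star V := by
  have h_root : MonotoneOn (fun x : ℝ => x ^ (1 / q)) (Ici 0) :=
    Real.monotoneOn_rpow_Ici_of_exponent_nonneg (by positivity)
  have hEZ {f : ℝ → ℝ} (hf : ∀ x, 0 ≤ x → 0 ≤ f x) : (E (cfc f Z)).PosSemidef :=
    nonneg_iff_posSemidef.1 (map_nonneg E (posSemidef_cfc hZ hf).nonneg)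
  have hX := hEZ fun x hx => Real.rpow_nonneg hx q
  have hY := hEZ fun x hx => Real.rpow_nonneg (hg_nonneg x hx) q
  rw [cfc_cfc_of_isHermitian hX.1, cfc_cfc_of_isHermitian hZ.1]
  refine exists_unitary_cfc_le_of_forall_state hX hY ?_ h_root fun φ hφ => ?_
  · exact (monotoneOn_Ici_of_convexOn_of_nonneg hg hg_zero hg_nonneg).comp h_root
      fun x hx => Real.rpow_nonneg hx _
  · exact map_functional_cfc_rpow_le hg hg_zero hg_nonneg hq (φ.comp E)
      ((OrderHomClass.mono φ hE).trans_eq hφ) hZ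

theorem stmt_5 {n m : ℕ} (E : Matrix (Fin n) (Fin n) ℂ →ₗ[ℂ] Matrix (Fin m) (Fin m) ℂ)
    (hpos : ∀ A : Matrix (Fin n) (Fin n) ℂ, A.PosSemidef → (E A).PosSemidef)
    (hsub : (1 - E 1).PosSemidef)
    (g : ℝ → ℝ) (hg0 : g 0 = 0) (hgnn : ∀ x : ℝ, 0 ≤ x → 0 ≤ g x)
    (hgconv : ConvexOn ℝ (Set.Ici 0) g)
    (Z : Matrix (Fin n) (Fin n) ℂ) (hZ : Z.PosSemidef)
    (q : ℝ) (hq : 1 ≤ q) :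
    ∃ V ∈ Matrix.unitaryGroup (Fin m) ℂ,
      (V * Ep E q (cfc g Z) * star V - cfc g (Ep E q Z)).PosSemidef :=
  stmt_5_general
    (PositiveLinearMap.mk₀ (E.restrictScalars ℝ) fun A hA =>
      (hpos A (nonneg_iff_posSemidef.1 hA)).nonneg)
    hsub hg0 hgnn hgconv hZ hq
end

section
/- Let h : [0,∞) → [0,∞) be an operator monotone function with h(1) = 1 (i.e. the representing function of an operator mean) that is geometrically convex, i.e. h(√(xy)) ≤ √(h(x)h(y)) for all x,y ≥ 0. For positive definite n×n complex matrices A, B define A σ B := A^{1/2} h(A^{-1/2} B A^{-1/2}) A^{1/2}. Then for every k = 1,…,n, setting a := (∏_{j=1}^k μ_j(A))^{1/k} and b := (∏_{j=n+1-k}^n μ_j(B))^{1/k}, one has (∏_{j=1}^k μ_j(A σ B))^{1/k} ≥ a·h(b/a). -/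
open scoped ComplexOrder

/-!
Let `V` be an isometry `ℂᵏ → ℂⁿ`. By the Cauchy–Binet formula there are probability weights `q_s`,
the squared moduli of the `k × k` minors of `V` in an eigenbasis of `C`, such that
`det (Vᴴ f(C) V) = ∑ₛ q_s ∏ᵢ f(λ_{s i})` for every function `f` of `C`. Each such determinant hence
lies between the weighted geometric mean `∏ₛ (∏ᵢ f(λ_{s i})) ^ q_s` and the product of the `k`
largest values of `f` on the spectrum. Geometric convexity is Jensen's inequality for geometric
means, so with `f = h` and `f = x⁻¹` it yields
`h (det (Vᴴ C⁻¹ V) ^ (-1/k)) ≤ det (Vᴴ h(C) V) ^ (1/k)`.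

Now let `C = A^{-1/2} B A^{-1/2}` and let the columns of `V` be the `k` leading eigenvectors of `A`.
Conjugation by `A^{1/2}` multiplies compression determinants by `aᵏ = ∏ⱼ μⱼ(A)`, so the two sides
become `det (Vᴴ (A σ B) V) ^ (1/k) / a` and `h (det (Vᴴ B⁻¹ V) ^ (-1/k) / a)`, which the extremal
bounds on compression determinants compare with the eigenvalue products of `A σ B` and `B`.
-/

open Matrix
open scoped Nat

section Order

theorem exists_perm_val_le_of_injective {k n : ℕ} {f : Fin k → Fin n} (hf : f.Injective) :
    ∃ σ : Equiv.Perm (Fin k), ∀ i : Fin k, (i : ℕ) ≤ f (σ i) := by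
  have hmono : StrictMono (f ∘ Tuple.sort f) :=
    (Tuple.monotone_sort f).strictMono_of_injective (hf.comp (Tuple.sort f).injective)
  refine ⟨Tuple.sort f, fun ⟨i, hi⟩ => ?_⟩
  induction i with
  | zero => exact Nat.zero_le _
  | succ i ih =>
    exact (ih (i.lt_succ_self.trans hi)).trans_lt (hmono (Fin.mk_lt_mk.2 i.lt_succ_self))

theorem prod_filter_val_lt {M : Type*} [CommMonoid M] {k n : ℕ} (hkn : k ≤ n) (g : Fin n → M) :
    ∏ i : Fin n with i.val < k, g i = ∏ i : Fin k, g (Fin.castLE hkn i) := by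
  refine (Finset.prod_nbij (Fin.castLE hkn) (by simp) (Fin.castLE_injective hkn).injOn ?_
    fun _ _ => rfl).symm
  exact fun j hj => ⟨⟨j, by simpa using hj⟩, by simp, rfl⟩

variable {k n : ℕ} {g : Fin n → ℝ} {f : Fin k → Fin n}

theorem prod_filter_val_lt_le_of_monotone (hg : Monotone g) (hg0 : ∀ i, 0 ≤ g i)
    (hf : f.Injective) : ∏ i : Fin n with i.val < k, g i ≤ ∏ i, g (f i) := by
  obtain ⟨σ, hσ⟩ := exists_perm_val_le_of_injective hf
  rw [prod_filter_val_lt (by simpa using Fintype.card_le_of_injective f hf),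
    ← Equiv.prod_comp σ fun i => g (f i)]
  exact Finset.prod_le_prod (fun _ _ => hg0 _) fun i _ => hg (hσ i)

theorem le_prod_filter_val_lt_of_antitone (hg : Antitone g) (hg0 : ∀ i, 0 ≤ g i)
    (hf : f.Injective) : ∏ i, g (f i) ≤ ∏ i : Fin n with i.val < k, g i := by
  obtain ⟨σ, hσ⟩ := exists_perm_val_le_of_injective hf
  rw [prod_filter_val_lt (by simpa using Fintype.card_le_of_injective f hf),
    ← Equiv.prod_comp σ fun i => g (f i)]
  exact Finset.prod_le_prod (fun _ _ => hg0 _) fun i _ => hg (hσ i)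

end Order

section CauchyBinet

variable {R m n : Type*} [CommRing R] [Fintype m] [DecidableEq m] [Fintype n]

theorem det_mul_eq_sum_prod_mul_det_submatrix (A : Matrix m n R) (B : Matrix n m R) :
    (A * B).det = ∑ f : m → n, (∏ i, A i (f i)) * (B.submatrix f id).det := by
  have hrows : A * B = fun i => ∑ j, A i j • B j := by
    ext i l
    simp [mul_apply]
  change detRowAlternating.toMultilinearMap (A * B) = _
  rw [hrows, MultilinearMap.map_sum]
  exact Finset.sum_congr rfl fun f _ => detRowAlternating.map_smul_univ _ _

theorem factorial_smul_det_mul (A : Matrix m n R) (B : Matrix n m R) :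
    (Fintype.card m)! • (A * B).det =
      ∑ f : m → n, (A.submatrix id f).det * (B.submatrix f id).det := by
  have hperm (σ : Equiv.Perm m) : (A * B).det =
      ∑ f : m → n, σ.sign • (∏ i, A i (f (σ i))) * (B.submatrix f id).det := by
    rw [det_mul_eq_sum_prod_mul_det_submatrix,
      ← Equiv.sum_comp (Equiv.arrowCongr σ⁻¹ (Equiv.refl n))]
    refine Finset.sum_congr rfl fun f _ => ?_
    have hsign : (B.submatrix (f ∘ σ) id).det = σ.sign * (B.submatrix f id).det :=
      det_permute σ (B.submatrix f id)
    change (∏ i, A i (f (σ i))) * (B.submatrix (f ∘ σ) id).det = _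
    rw [hsign, Units.smul_def, zsmul_eq_mul]
    ring
  calc (Fintype.card m)! • (A * B).det
      = ∑ σ : Equiv.Perm m, ∑ f : m → n,
          σ.sign • (∏ i, A i (f (σ i))) * (B.submatrix f id).det := by
        simp only [← hperm, Finset.sum_const, Finset.card_univ, Fintype.card_perm]
    _ = _ := by
        rw [Finset.sum_comm]
        refine Finset.sum_congr rfl fun f _ => ?_
        rw [← Finset.sum_mul, ← det_transpose (A.submatrix id f), det_apply (A.submatrix id f)ᵀ]
        rfl

end CauchyBinet

section MidpointConvexity

theorem nonpos_of_midpoint_le_of_bddAbove {G : ℝ → ℝ} (hG0 : G 0 ≤ 0) (hG1 : G 1 ≤ 0)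
    (hmid : ∀ u ∈ Set.Icc 0 1, ∀ v ∈ Set.Icc 0 1, G (midpoint ℝ u v) ≤ midpoint ℝ (G u) (G v))
    (hbdd : BddAbove (G '' Set.Icc 0 1)) {t : ℝ} (ht : t ∈ Set.Icc 0 1) : G t ≤ 0 := by
  let S := sSup (G '' Set.Icc 0 1)
  have hle {v : ℝ} (hv : v ∈ Set.Icc 0 1) : G v ≤ S := le_csSup hbdd (Set.mem_image_of_mem G hv)
  have hmid_end {u v : ℝ} (hu : u ∈ Set.Icc 0 1) (hGu : G u ≤ 0) (hv : v ∈ Set.Icc 0 1) :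
      G (midpoint ℝ u v) ≤ S / 2 := by
    refine (hmid u hu v hv).trans ?_
    rw [midpoint_eq_smul_add, smul_eq_mul, invOf_eq_inv]
    linarith [hle hv]
  have hhalf {t : ℝ} (ht : t ∈ Set.Icc 0 1) : G t ≤ S / 2 := by
    rcases le_total t (1 / 2) with h | h
    · rw [show t = midpoint ℝ 0 (2 * t) by simp [midpoint_eq_smul_add]]
      exact hmid_end (by simp) hG0 ⟨by linarith [ht.1], by linarith⟩
    · rw [show t = midpoint ℝ 1 (2 * t - 1) by simp [midpoint_eq_smul_add]]
      exact hmid_end (by simp) hG1 ⟨by linarith, by linarith [ht.2]⟩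
  have hS : S ≤ S / 2 :=
    csSup_le ((Set.nonempty_Icc.2 zero_le_one).image G) (Set.forall_mem_image.2 fun _ => hhalf)
  linarith [hle ht]

variable {E : Type*} [AddCommGroup E] [Module ℝ E] {s : Set E} {F : E → ℝ}

theorem convexOn_of_midpoint_le_of_bddAbove (hs : Convex ℝ s)
    (hmid : ∀ x ∈ s, ∀ y ∈ s, F (midpoint ℝ x y) ≤ midpoint ℝ (F x) (F y))
    (hbdd : ∀ x ∈ s, ∀ y ∈ s, BddAbove (F '' segment ℝ x y)) : ConvexOn ℝ s F := by
  refine ⟨hs, fun x hx y hy a b ha hb hab => ?_⟩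
  have hline {t : ℝ} (ht : t ∈ Set.Icc 0 1) : AffineMap.lineMap x y t ∈ segment ℝ x y :=
    segment_eq_image_lineMap ℝ x y ▸ Set.mem_image_of_mem _ ht
  let G : ℝ → ℝ := fun t => F (AffineMap.lineMap x y t) - AffineMap.lineMap (F x) (F y) t
  have hGmid (u) (hu : u ∈ Set.Icc 0 1) (v) (hv : v ∈ Set.Icc 0 1) :
      G (midpoint ℝ u v) ≤ midpoint ℝ (G u) (G v) := by
    have hseg := hs.segment_subset hx hy
    have hF := hmid _ (hseg (hline hu)) _ (hseg (hline hv))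
    simp only [G, AffineMap.map_midpoint]
    exact (sub_le_sub_right hF _).trans_eq (midpoint_vsub_midpoint (V := ℝ) (P := ℝ) ..)
  have hGbdd : BddAbove (G '' Set.Icc 0 1) := by
    obtain ⟨c, hc⟩ := hbdd x hx y hy
    refine ⟨c - F x ⊓ F y, Set.forall_mem_image.2 fun t ht => sub_le_sub ?_ ?_⟩
    · exact hc (Set.mem_image_of_mem F (hline ht))
    · have hmem := Set.mem_image_of_mem (AffineMap.lineMap (k := ℝ) (F x) (F y)) ht
      rw [← segment_eq_image_lineMap, segment_eq_uIcc] at hmem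
      exact hmem.1
  have hGb : G b ≤ 0 := nonpos_of_midpoint_le_of_bddAbove (by simp [G]) (by simp [G]) hGmid hGbdd
    ⟨hb, by linarith⟩
  rw [eq_sub_of_add_eq hab, ← sub_nonpos]
  simpa only [G, AffineMap.lineMap_apply_module] using hGb

end MidpointConvexity

/-- Geometric convexity of `h` on `s`, in the midpoint form: `log ∘ h ∘ exp` is midpoint convex
where `h` is positive. The square roots are meant for `s ⊆ [0, ∞)` and `h` nonnegative on `s`. -/
def GeometricallyConvexOn (s : Set ℝ) (h : ℝ → ℝ) : Prop :=
  ∀ ⦃x⦄, x ∈ s → ∀ ⦃y⦄, y ∈ s → h √(x * y) ≤ √(h x * h y)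

namespace GeometricallyConvexOn

open Set

variable {h : ℝ → ℝ}

theorem pos_of_map_one_pos (hgc : GeometricallyConvexOn (Ioi 0) h) (hnn : ∀ x ∈ Ioi 0, 0 ≤ h x)
    (h1 : 0 < h 1) {x : ℝ} (hx : x ∈ Ioi 0) : 0 < h x := by
  refine (hnn x hx).lt_of_ne fun h0 => h1.not_ge ?_
  simpa [← h0, mul_inv_cancel₀ (mem_Ioi.1 hx).ne'] using hgc hx (mem_Ioi.2 (inv_pos.2 hx))

theorem convexOn_log_comp_exp (hgc : GeometricallyConvexOn (Ioi 0) h)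
    (hpos : ∀ x ∈ Ioi 0, 0 < h x) (hmono : MonotoneOn h (Ioi 0)) :
    ConvexOn ℝ univ fun u => Real.log (h (Real.exp u)) := by
  have hposexp (u : ℝ) : 0 < h (Real.exp u) := hpos _ (Real.exp_pos u)
  have hlogmono : Monotone fun u => Real.log (h (Real.exp u)) := fun u v huv =>
    Real.log_le_log (hposexp u) (hmono (Real.exp_pos u) (Real.exp_pos v) (Real.exp_le_exp.2 huv))
  refine convexOn_of_midpoint_le_of_bddAbove convex_univ (fun u _ v _ => ?_) fun u _ v _ => ?_
  · have hle := Real.log_le_log (hpos _ (Real.sqrt_pos.2 (by positivity)))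
      (hgc (Real.exp_pos u) (Real.exp_pos v))
    rw [← Real.exp_add, ← Real.exp_half,
      Real.log_sqrt (mul_pos (hposexp u) (hposexp v)).le,
      Real.log_mul (hposexp u).ne' (hposexp v).ne'] at hle
    simpa [midpoint_eq_smul_add, div_eq_inv_mul] using hle
  · rw [segment_eq_uIcc]
    exact hlogmono.map_bddAbove bddAbove_Icc

theorem map_prod_rpow_le (hgc : GeometricallyConvexOn (Ioi 0) h)
    (hpos : ∀ x ∈ Ioi 0, 0 < h x) (hmono : MonotoneOn h (Ioi 0))
    {ι : Type*} {s : Finset ι} {w x : ι → ℝ}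
    (hw : ∀ i ∈ s, 0 ≤ w i) (hw1 : ∑ i ∈ s, w i = 1) (hx : ∀ i ∈ s, 0 < x i) :
    h (∏ i ∈ s, x i ^ w i) ≤ ∏ i ∈ s, h (x i) ^ w i := by
  have hxw : 0 < ∏ i ∈ s, x i ^ w i := Finset.prod_pos fun i hi => Real.rpow_pos_of_pos (hx i hi) _
  have hhxw (i) (hi : i ∈ s) : 0 < h (x i) ^ w i := Real.rpow_pos_of_pos (hpos _ (hx i hi)) _
  have hexp : Real.exp (∑ i ∈ s, w i * Real.log (x i)) = ∏ i ∈ s, x i ^ w i := by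
    rw [Real.exp_sum]
    exact Finset.prod_congr rfl fun i hi => by rw [Real.rpow_def_of_pos (hx i hi), mul_comm]
  have hlog : Real.log (∏ i ∈ s, h (x i) ^ w i) = ∑ i ∈ s, w i * Real.log (h (x i)) := by
    rw [Real.log_prod fun i hi => (hhxw i hi).ne']
    exact Finset.sum_congr rfl fun i hi => Real.log_rpow (hpos _ (hx i hi)) _
  rw [← Real.log_le_log_iff (hpos _ hxw) (Finset.prod_pos hhxw), hlog, ← hexp]
  have hconv := hgc.convexOn_log_comp_exp hpos hmono
  refine (hconv.map_sum_le hw hw1 fun _ _ => mem_univ _).trans_eq ?_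
  exact Finset.sum_congr rfl fun i hi => by rw [Real.exp_log (hx i hi), smul_eq_mul]

theorem map_prod_prod_rpow_le (hgc : GeometricallyConvexOn (Ioi 0) h)
    (hpos : ∀ x ∈ Ioi 0, 0 < h x) (hmono : MonotoneOn h (Ioi 0))
    {ι κ : Type*} [Fintype ι] [Fintype κ] [Nonempty κ] {w : ι → ℝ} {x : ι → κ → ℝ}
    (hw : ∀ i, 0 ≤ w i) (hw1 : ∑ i, w i = 1) (hx : ∀ i j, 0 < x i j) :
    h ((∏ i, (∏ j, x i j) ^ w i) ^ (Fintype.card κ : ℝ)⁻¹) ≤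
      (∏ i, (∏ j, h (x i j)) ^ w i) ^ (Fintype.card κ : ℝ)⁻¹ := by
  have hprod {y : ι → κ → ℝ} (hy : ∀ i j, 0 < y i j) (c : ℝ) :
      (∏ i, (∏ j, y i j) ^ w i) ^ c = ∏ p : ι × κ, y p.1 p.2 ^ (w p.1 * c) := by
    have hy0 (i : ι) : 0 ≤ ∏ j, y i j := Finset.prod_nonneg fun j _ => (hy i j).le
    rw [Fintype.prod_prod_type, ← Real.finsetProd_rpow _ _ fun i _ => Real.rpow_nonneg (hy0 i) _]
    refine Finset.prod_congr rfl fun i _ => ?_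
    rw [← Real.rpow_mul (hy0 i)]
    exact (Real.finsetProd_rpow _ _ (fun j _ => (hy i j).le) _).symm
  rw [hprod hx, hprod fun i j => hpos _ (hx i j)]
  refine hgc.map_prod_rpow_le hpos hmono (fun p _ => mul_nonneg (hw p.1) (by positivity)) ?_
    fun p _ => hx p.1 p.2
  simp [Fintype.sum_prod_type, mul_left_comm, hw1]

end GeometricallyConvexOn

section MinorWeight

variable {𝕜 m n : Type*} [RCLike 𝕜] [Fintype m] [DecidableEq m]

/-- The weight `|det W_s|² / m!` of the square minor of `W` with rows `s`. Rows are indexed by all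
maps `s : m → n` instead of `m`-element subsets of `n`, whence the factor `1 / m!`; by the
Cauchy–Binet formula these weights form a probability distribution when `Wᴴ * W = 1`. -/
noncomputable def minorWeight (W : Matrix n m 𝕜) (s : m → n) : ℝ :=
  ‖(W.submatrix s id).det‖ ^ 2 / (Fintype.card m)!

theorem minorWeight_nonneg (W : Matrix n m 𝕜) (s : m → n) : 0 ≤ minorWeight W s := by
  unfold minorWeight
  positivity

theorem minorWeight_of_not_injective (W : Matrix n m 𝕜) {s : m → n} (hs : ¬ s.Injective) :
    minorWeight W s = 0 := by
  obtain ⟨i, j, hij, hne⟩ : ∃ i j, s i = s j ∧ i ≠ j := by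
    simpa only [Function.Injective, not_forall, exists_prop] using hs
  have hdet : (W.submatrix s id).det = 0 := det_zero_of_row_eq hne (by ext l; simp [hij])
  simp [minorWeight, hdet]

variable [Fintype n]

theorem det_conjTranspose_mul_diagonal_mul [DecidableEq n] (W : Matrix n m 𝕜) (g : n → ℝ) :
    (Wᴴ * diagonal (fun j => (g j : 𝕜)) * W).det =
      ((∑ s, minorWeight W s * ∏ i, g (s i) : ℝ) : 𝕜) := by
  have hminor (s : m → n) : ((Wᴴ * diagonal fun j => (g j : 𝕜)).submatrix id s).det *
      (W.submatrix s id).det =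
        ((Fintype.card m)! : 𝕜) * (minorWeight W s * ∏ i, g (s i) : ℝ) := by
    have hsub : (Wᴴ * diagonal fun j => (g j : 𝕜)).submatrix id s =
        (W.submatrix s id)ᴴ * diagonal fun i => (g (s i) : 𝕜) := by
      ext i j
      simp [mul_diagonal]
    rw [hsub, det_mul, det_conjTranspose, det_diagonal, mul_right_comm, RCLike.star_def,
      RCLike.conj_mul]
    have hfac : ((Fintype.card m)! : 𝕜) ≠ 0 := by exact_mod_cast Nat.factorial_ne_zero _
    simp only [minorWeight]
    push_cast
    field_simp
  have hCB := factorial_smul_det_mul (Wᴴ * diagonal fun j => (g j : 𝕜)) W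
  rw [Finset.sum_congr rfl fun s _ => hminor s, ← Finset.mul_sum, nsmul_eq_mul] at hCB
  rw [mul_left_cancel₀ (by exact_mod_cast Nat.factorial_ne_zero _) hCB, RCLike.ofReal_sum]

theorem sum_minorWeight {W : Matrix n m 𝕜} (hW : Wᴴ * W = 1) : ∑ s, minorWeight W s = 1 := by
  classical
  have hdet := det_conjTranspose_mul_diagonal_mul W 1
  simp only [Pi.one_apply, RCLike.ofReal_one, diagonal_one, Matrix.mul_one, hW, det_one,
    Finset.prod_const_one, mul_one] at hdet
  exact_mod_cast hdet.symm

end MinorWeight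

section CompressionDet

variable {𝕜 m n : Type*} [RCLike 𝕜] [Fintype m] [DecidableEq m] [Fintype n] {V : Matrix n m 𝕜}

/-- The determinant of the compression `Vᴴ Z V` of `Z` to the range of `V`. The real part makes it
a real number; nothing is lost when `Z` is Hermitian. -/
noncomputable def compressionDet (V : Matrix n m 𝕜) (Z : Matrix n n 𝕜) : ℝ :=
  RCLike.re (Vᴴ * Z * V).det

theorem compressionDet_mul_mul {S : Matrix n n 𝕜} (hS : S.IsHermitian) {d : m → ℝ}
    (hSV : S * V = V * diagonal fun i => (d i : 𝕜)) (Z : Matrix n n 𝕜) :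
    compressionDet V (S * Z * S) = (∏ i, d i) ^ 2 * compressionDet V Z := by
  have hVS : Vᴴ * S = diagonal (fun i => (d i : 𝕜)) * Vᴴ := by
    have hstar := congrArg conjTranspose hSV
    rw [conjTranspose_mul, conjTranspose_mul, hS.eq, diagonal_conjTranspose] at hstar
    simpa [Pi.star_def] using hstar
  have hcomp : Vᴴ * (S * Z * S) * V = diagonal (fun i => (d i : 𝕜)) * (Vᴴ * Z * V) *
      diagonal fun i => (d i : 𝕜) := by
    simp only [Matrix.mul_assoc, hSV]
    simp only [← Matrix.mul_assoc, hVS]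
  rw [compressionDet, hcomp, det_mul, det_mul, det_diagonal, ← RCLike.ofReal_prod, mul_comm,
    ← mul_assoc, ← RCLike.ofReal_mul, RCLike.re_ofReal_mul, compressionDet, sq]

end CompressionDet

section Spectral

variable {𝕜 m n : Type*} [RCLike 𝕜] [Fintype n] [DecidableEq n] {C : Matrix n n 𝕜}

theorem cfc_eq_eigenvectorUnitary_mul_diagonal_mul (hC : C.IsHermitian) (f : ℝ → ℝ) :
    cfc f C = (hC.eigenvectorUnitary : Matrix n n 𝕜) *
      diagonal (fun i => (f (hC.eigenvalues i) : 𝕜)) * (hC.eigenvectorUnitary : Matrix n n 𝕜)ᴴ := by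
  rw [hC.cfc_eq, IsHermitian.cfc, Unitary.conjStarAlgAut_apply]
  rfl

theorem posSemidef_cfc_s6 (hC : C.IsHermitian) {f : ℝ → ℝ} (hf : ∀ j, 0 ≤ f (hC.eigenvalues j)) :
    (cfc f C).PosSemidef := by
  rw [cfc_eq_eigenvectorUnitary_mul_diagonal_mul hC]
  have hdiag : (diagonal fun j => (f (hC.eigenvalues j) : 𝕜)).PosSemidef :=
    posSemidef_diagonal_iff.2 fun j => RCLike.ofReal_nonneg.2 (hf j)
  exact hdiag.mul_mul_conjTranspose_same _

theorem monotoneOn_of_posSemidef_cfc_sub_cfc [Nonempty n] {h : ℝ → ℝ}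
    (hop : ∀ X Y : Matrix n n 𝕜, X.PosSemidef → (Y - X).PosSemidef →
      (cfc h Y - cfc h X).PosSemidef) : MonotoneOn h (Set.Ici 0) := by
  intro x hx y _ hxy
  have hiff (z : ℝ) : (algebraMap ℝ (Matrix n n 𝕜) z).PosSemidef ↔ 0 ≤ z := by
    simp [algebraMap_eq_diagonal, posSemidef_diagonal_iff]
  have hyx : (algebraMap ℝ (Matrix n n 𝕜) y - algebraMap ℝ _ x).PosSemidef := by
    rwa [← map_sub, hiff, sub_nonneg]
  have hsub := hop _ _ ((hiff x).2 hx) hyx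
  rwa [cfc_algebraMap, cfc_algebraMap, ← map_sub, hiff, sub_nonneg] at hsub

/-- The coordinates of the columns of `V` in the eigenvector basis of the Hermitian matrix `C`. -/
noncomputable def eigenCoords (hC : C.IsHermitian) (V : Matrix n m 𝕜) : Matrix n m 𝕜 :=
  (hC.eigenvectorUnitary : Matrix n n 𝕜)ᴴ * V

variable [DecidableEq m] {V : Matrix n m 𝕜}

theorem conjTranspose_eigenCoords_mul_self (hC : C.IsHermitian) (hV : Vᴴ * V = 1) :
    (eigenCoords hC V)ᴴ * eigenCoords hC V = 1 := by
  have hU : (hC.eigenvectorUnitary : Matrix n n 𝕜) * (hC.eigenvectorUnitary : Matrix n n 𝕜)ᴴ = 1 :=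
    Unitary.coe_mul_star_self _
  rw [eigenCoords, conjTranspose_mul, conjTranspose_conjTranspose, Matrix.mul_assoc,
    ← Matrix.mul_assoc _ _ V, hU, Matrix.one_mul, hV]

theorem conjTranspose_submatrix_mul_self {U : Matrix n n 𝕜} (hU : Uᴴ * U = 1) {s : m → n}
    (hs : s.Injective) : (U.submatrix id s)ᴴ * U.submatrix id s = 1 := by
  rw [conjTranspose_submatrix, ← submatrix_mul _ _ s id s Function.bijective_id, hU,
    submatrix_one s hs]

variable [Fintype m]

theorem compressionDet_cfc (hC : C.IsHermitian) (V : Matrix n m 𝕜) (f : ℝ → ℝ) :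
    compressionDet V (cfc f C) =
      ∑ s, minorWeight (eigenCoords hC V) s * ∏ i, f (hC.eigenvalues (s i)) := by
  have hcomp : Vᴴ * cfc f C * V = (eigenCoords hC V)ᴴ *
      diagonal (fun i => (f (hC.eigenvalues i) : 𝕜)) * eigenCoords hC V := by
    simp only [cfc_eq_eigenvectorUnitary_mul_diagonal_mul hC, eigenCoords, conjTranspose_mul,
      conjTranspose_conjTranspose, Matrix.mul_assoc]
  rw [compressionDet, hcomp, det_conjTranspose_mul_diagonal_mul, RCLike.ofReal_re]

theorem compressionDet_cfc_le (hC : C.IsHermitian) (hV : Vᴴ * V = 1) {f : ℝ → ℝ} {c : ℝ}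
    (hc : ∀ s : m → n, s.Injective → ∏ i, f (hC.eigenvalues (s i)) ≤ c) :
    compressionDet V (cfc f C) ≤ c := by
  set q := minorWeight (eigenCoords hC V)
  calc compressionDet V (cfc f C) = ∑ s, q s * ∏ i, f (hC.eigenvalues (s i)) :=
        compressionDet_cfc hC V f
    _ ≤ ∑ s, q s * c := Finset.sum_le_sum fun s _ => by
        by_cases hs : s.Injective
        · exact mul_le_mul_of_nonneg_left (hc s hs) (minorWeight_nonneg _ s)
        · simp only [q, minorWeight_of_not_injective _ hs, zero_mul, le_refl]
    _ = c := by
        rw [← Finset.sum_mul, sum_minorWeight (conjTranspose_eigenCoords_mul_self hC hV), one_mul]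

theorem prod_rpow_minorWeight_le_compressionDet (hC : C.IsHermitian) (hV : Vᴴ * V = 1)
    {f : ℝ → ℝ} (hf : ∀ j, 0 ≤ f (hC.eigenvalues j)) :
    ∏ s : m → n, (∏ i, f (hC.eigenvalues (s i))) ^ minorWeight (eigenCoords hC V) s ≤
      compressionDet V (cfc f C) := by
  rw [compressionDet_cfc hC V f]
  exact Real.geom_mean_le_arith_mean_weighted _ _ _ (fun s _ => minorWeight_nonneg _ s)
    (sum_minorWeight (conjTranspose_eigenCoords_mul_self hC hV))
    fun s _ => Finset.prod_nonneg fun i _ => hf (s i)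

theorem compressionDet_cfc_pos (hC : C.IsHermitian) (hV : Vᴴ * V = 1)
    {f : ℝ → ℝ} (hf : ∀ j, 0 < f (hC.eigenvalues j)) : 0 < compressionDet V (cfc f C) :=
  (Finset.prod_pos fun s _ => Real.rpow_pos_of_pos (Finset.prod_pos fun i _ => hf (s i)) _).trans_le
    (prod_rpow_minorWeight_le_compressionDet hC hV fun j => (hf j).le)

theorem cfc_inv_eq_nonsing_inv (hC : C.PosDef) : cfc (fun x : ℝ => x⁻¹) C = C⁻¹ := by
  rw [nonsing_inv_eq_ringInverse]
  exact cfc_ringInverse_id C hC.isUnit hC.1.isSelfAdjoint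

theorem compressionDet_inv_pos (hC : C.PosDef) (hV : Vᴴ * V = 1) : 0 < compressionDet V C⁻¹ :=
  cfc_inv_eq_nonsing_inv hC ▸
    compressionDet_cfc_pos hC.1 hV fun j => inv_pos.2 (hC.eigenvalues_pos j)

theorem inv_compressionDet_inv_le_prod_rpow_minorWeight (hC : C.PosDef) (hV : Vᴴ * V = 1) :
    (compressionDet V C⁻¹)⁻¹ ≤
      ∏ s : m → n, (∏ i, hC.1.eigenvalues (s i)) ^ minorWeight (eigenCoords hC.1 V) s := by
  have hμ (j : n) : 0 < hC.1.eigenvalues j := hC.eigenvalues_pos j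
  have hle := prod_rpow_minorWeight_le_compressionDet hC.1 hV fun j => (inv_pos.2 (hμ j)).le
  simp only [cfc_inv_eq_nonsing_inv hC, Finset.prod_inv_distrib,
    Real.inv_rpow (Finset.prod_nonneg fun _ _ => (hμ _).le)] at hle
  exact inv_le_of_inv_le₀
    (Finset.prod_pos fun s _ => Real.rpow_pos_of_pos (Finset.prod_pos fun i _ => hμ _) _) hle

theorem GeometricallyConvexOn.map_rpow_inv_compressionDet_inv_le [Nonempty m] {h : ℝ → ℝ}
    (hgc : GeometricallyConvexOn (Set.Ioi 0) h) (hpos : ∀ x ∈ Set.Ioi 0, 0 < h x)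
    (hmono : MonotoneOn h (Set.Ioi 0)) (hC : C.PosDef) (hV : Vᴴ * V = 1) :
    h ((compressionDet V C⁻¹)⁻¹ ^ (Fintype.card m : ℝ)⁻¹) ≤
      compressionDet V (cfc h C) ^ (Fintype.card m : ℝ)⁻¹ := by
  set q : (m → n) → ℝ := minorWeight (eigenCoords hC.1 V)
  set μ := hC.1.eigenvalues
  have hμ (j : n) : 0 < μ j := hC.eigenvalues_pos j
  have hinv_pos : 0 < compressionDet V C⁻¹ := compressionDet_inv_pos hC hV
  have hinv_le : (compressionDet V C⁻¹)⁻¹ ≤ ∏ s, (∏ i, μ (s i)) ^ q s :=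
    inv_compressionDet_inv_le_prod_rpow_minorWeight hC hV
  have hle_cfc : ∏ s, (∏ i, h (μ (s i))) ^ q s ≤ compressionDet V (cfc h C) :=
    prod_rpow_minorWeight_le_compressionDet hC.1 hV fun j => (hpos _ (hμ j)).le
  have hinv_pow_pos := Real.rpow_pos_of_pos (inv_pos.2 hinv_pos) (Fintype.card m : ℝ)⁻¹
  calc h ((compressionDet V C⁻¹)⁻¹ ^ (Fintype.card m : ℝ)⁻¹)
      ≤ h ((∏ s, (∏ i, μ (s i)) ^ q s) ^ (Fintype.card m : ℝ)⁻¹) := by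
        have hpow_le := Real.rpow_le_rpow (inv_pos.2 hinv_pos).le hinv_le
          (inv_nonneg.2 (Fintype.card m).cast_nonneg)
        exact hmono hinv_pow_pos (hinv_pow_pos.trans_le hpow_le) hpow_le
    _ ≤ (∏ s, (∏ i, h (μ (s i))) ^ q s) ^ (Fintype.card m : ℝ)⁻¹ :=
        hgc.map_prod_prod_rpow_le hpos hmono (fun s => minorWeight_nonneg _ s)
          (sum_minorWeight (conjTranspose_eigenCoords_mul_self hC.1 hV)) fun s i => hμ (s i)
    _ ≤ compressionDet V (cfc h C) ^ (Fintype.card m : ℝ)⁻¹ := by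
        refine Real.rpow_le_rpow ?_ hle_cfc (by positivity)
        exact Finset.prod_nonneg fun s _ =>
          Real.rpow_nonneg (Finset.prod_nonneg fun i _ => (hpos _ (hμ _)).le) _

theorem cfc_mul_submatrix_eigenvectorUnitary (hC : C.IsHermitian) (f : ℝ → ℝ) (s : m → n) :
    cfc f C * (hC.eigenvectorUnitary : Matrix n n 𝕜).submatrix id s =
      (hC.eigenvectorUnitary : Matrix n n 𝕜).submatrix id s *
        diagonal fun i => (f (hC.eigenvalues (s i)) : 𝕜) := by
  have hU : (hC.eigenvectorUnitary : Matrix n n 𝕜)ᴴ * (hC.eigenvectorUnitary : Matrix n n 𝕜) = 1 :=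
    Unitary.coe_star_mul_self _
  have hmul : cfc f C * (hC.eigenvectorUnitary : Matrix n n 𝕜) =
      (hC.eigenvectorUnitary : Matrix n n 𝕜) *
        diagonal fun j => (f (hC.eigenvalues j) : 𝕜) := by
    rw [cfc_eq_eigenvectorUnitary_mul_diagonal_mul hC, Matrix.mul_assoc, hU, Matrix.mul_one]
  ext i j
  have hij := congrFun₂ hmul i (s j)
  rw [mul_diagonal] at hij
  rw [mul_diagonal]
  exact hij

end Spectral

section EigenvalueProducts

variable {n k : ℕ} {A B : Matrix (Fin n) (Fin n) ℂ}

theorem eigUp_monotone (hA : A.IsHermitian) : Monotone (eigUp hA) := Tuple.monotone_sort _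

theorem eigDown_antitone (hA : A.IsHermitian) : Antitone (eigDown hA) := fun _ _ hij =>
  eigUp_monotone hA (Fin.rev_le_rev.2 hij)

theorem prodSmall_of_isHermitian (hA : A.IsHermitian) (k : ℕ) :
    prodSmall A k = ∏ i : Fin n with i.val < k, eigUp hA i :=
  dif_pos hA

theorem prodLarge_of_isHermitian (hA : A.IsHermitian) (k : ℕ) :
    prodLarge A k = ∏ i : Fin n with i.val < k, eigDown hA i :=
  dif_pos hA

theorem prodSmall_pos (hA : A.PosDef) (k : ℕ) : 0 < prodSmall A k := by
  rw [prodSmall_of_isHermitian hA.1]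
  exact Finset.prod_pos fun _ _ => hA.eigenvalues_pos _

theorem prodLarge_pos (hA : A.PosDef) (k : ℕ) : 0 < prodLarge A k := by
  rw [prodLarge_of_isHermitian hA.1]
  exact Finset.prod_pos fun _ _ => hA.eigenvalues_pos _

theorem prodSmall_le_prod_eigenvalues (hA : A.PosSemidef) {s : Fin k → Fin n} (hs : s.Injective) :
    prodSmall A k ≤ ∏ i, hA.1.eigenvalues (s i) := by
  set σ := Tuple.sort hA.1.eigenvalues
  have hle := prod_filter_val_lt_le_of_monotone (eigUp_monotone hA.1)
    (fun _ => hA.eigenvalues_nonneg _) (σ.symm.injective.comp hs)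
  simpa [prodSmall_of_isHermitian hA.1, eigUp, σ] using hle

theorem prod_eigenvalues_le_prodLarge (hA : A.PosSemidef) {s : Fin k → Fin n} (hs : s.Injective) :
    ∏ i, hA.1.eigenvalues (s i) ≤ prodLarge A k := by
  set σ := Tuple.sort hA.1.eigenvalues
  have hle := le_prod_filter_val_lt_of_antitone (eigDown_antitone hA.1)
    (fun _ => hA.eigenvalues_nonneg _) (Fin.rev_injective.comp (σ.symm.injective.comp hs))
  simpa [prodLarge_of_isHermitian hA.1, eigDown, eigUp, σ] using hle

variable {V : Matrix (Fin n) (Fin k) ℂ}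

theorem compressionDet_le_prodLarge (hA : A.PosSemidef) (hV : Vᴴ * V = 1) :
    compressionDet V A ≤ prodLarge A k := by
  have hle := compressionDet_cfc_le (f := id) hA.1 hV fun s hs =>
    prod_eigenvalues_le_prodLarge hA hs
  rwa [cfc_id ℝ A hA.1.isSelfAdjoint] at hle

theorem compressionDet_inv_le (hB : B.PosDef) (hV : Vᴴ * V = 1) :
    compressionDet V B⁻¹ ≤ (prodSmall B k)⁻¹ := by
  rw [← cfc_inv_eq_nonsing_inv hB]
  refine compressionDet_cfc_le hB.1 hV fun s hs => ?_
  rw [Finset.prod_inv_distrib]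
  exact inv_anti₀ (prodSmall_pos hB k) (prodSmall_le_prod_eigenvalues hB.posSemidef hs)

theorem exists_compressionDet_sqrtM_mul_mul_eq (hA : A.PosSemidef) (hkn : k ≤ n) :
    ∃ V : Matrix (Fin n) (Fin k) ℂ, Vᴴ * V = 1 ∧
      ∀ Z, compressionDet V (sqrtM A * Z * sqrtM A) = prodLarge A k * compressionDet V Z := by
  let s : Fin k → Fin n := fun i => Tuple.sort hA.1.eigenvalues (Fin.castLE hkn i).rev
  have hs : s.Injective :=
    (Equiv.injective _).comp (Fin.rev_injective.comp (Fin.castLE_injective _))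
  have hprod : (∏ i, √(hA.1.eigenvalues (s i))) ^ 2 = prodLarge A k := by
    rw [prodLarge_of_isHermitian hA.1, prod_filter_val_lt hkn, ← Finset.prod_pow]
    exact Finset.prod_congr rfl fun i _ => Real.sq_sqrt (hA.eigenvalues_nonneg _)
  refine ⟨(hA.1.eigenvectorUnitary : Matrix _ _ ℂ).submatrix id s,
    conjTranspose_submatrix_mul_self (Unitary.coe_star_mul_self _) hs, fun Z => ?_⟩
  rw [← hprod]
  exact compressionDet_mul_mul (cfc_predicate _ A)
    (cfc_mul_submatrix_eigenvectorUnitary hA.1 _ s) Z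

end EigenvalueProducts

section OperatorMean

variable {n : ℕ} {h : ℝ → ℝ} {A B : Matrix (Fin n) (Fin n) ℂ}

theorem sqrtM_mul_invSqrtM (hA : A.PosDef) : sqrtM A * invSqrtM A = 1 := by
  have hsqrt : ∀ x ∈ spectrum ℝ A, √x ≠ 0 := by
    rw [hA.1.spectrum_real_eq_range_eigenvalues, Set.forall_mem_range]
    exact fun i => (Real.sqrt_pos.2 (hA.eigenvalues_pos i)).ne'
  have hcont : ContinuousOn Real.sqrt (spectrum ℝ A) := Real.continuous_sqrt.continuousOn
  have hmul : cfc (fun x => √x * (√x)⁻¹) A = sqrtM A * invSqrtM A :=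
    cfc_mul _ _ A hcont (hcont.inv₀ hsqrt)
  rw [← hmul, ← cfc_one ℝ A hA.1.isSelfAdjoint]
  exact cfc_congr fun x hx => mul_inv_cancel₀ (hsqrt x hx)

theorem inv_invSqrtM_mul_mul (hA : A.PosDef) (B : Matrix (Fin n) (Fin n) ℂ) :
    (invSqrtM A * B * invSqrtM A)⁻¹ = sqrtM A * B⁻¹ * sqrtM A := by
  have hinv : (invSqrtM A)⁻¹ = sqrtM A := inv_eq_left_inv (sqrtM_mul_invSqrtM hA)
  rw [Matrix.mul_inv_rev, Matrix.mul_inv_rev, hinv, Matrix.mul_assoc]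

theorem posDef_invSqrtM_mul_mul (hA : A.PosDef) (hB : B.PosDef) :
    (invSqrtM A * B * invSqrtM A).PosDef := by
  have hstar : star (invSqrtM A) = invSqrtM A := cfc_predicate (R := ℝ) _ A
  have hunit : IsUnit (invSqrtM A) := .of_mul_eq_one_right _ (sqrtM_mul_invSqrtM hA)
  have hconj := (IsUnit.posDef_star_left_conjugate_iff hunit).2 hB
  rwa [hstar] at hconj

theorem posSemidef_opMean (hh : ∀ x ∈ Set.Ioi 0, 0 ≤ h x) (hA : A.PosDef) (hB : B.PosDef) :
    (opMean h A B).PosSemidef := by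
  have hC := posDef_invSqrtM_mul_mul hA hB
  have hstar : (sqrtM A)ᴴ = sqrtM A := cfc_predicate (R := ℝ) _ A
  have hcfc := posSemidef_cfc_s6 hC.1 fun i => hh _ (hC.eigenvalues_pos i)
  have hconj := hcfc.mul_mul_conjTranspose_same (sqrtM A)
  rwa [hstar] at hconj

end OperatorMean

theorem stmt_6_general {n : ℕ} {h : ℝ → ℝ} (hnn : ∀ x ∈ Set.Ioi 0, 0 ≤ h x) (h1 : 0 < h 1)
    (hmono : MonotoneOn h (Set.Ioi 0)) (hgc : GeometricallyConvexOn (Set.Ioi 0) h)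
    {A B : Matrix (Fin n) (Fin n) ℂ} (hA : A.PosDef) (hB : B.PosDef)
    {k : ℕ} (hk1 : 1 ≤ k) (hkn : k ≤ n) :
    (prodLarge A k ^ ((k : ℝ)⁻¹)) *
        h ((prodSmall B k ^ ((k : ℝ)⁻¹)) / (prodLarge A k ^ ((k : ℝ)⁻¹)))
      ≤ prodLarge (opMean h A B) k ^ ((k : ℝ)⁻¹) := by
  have : Nonempty (Fin k) := ⟨⟨0, hk1⟩⟩
  have hpos (x) (hx : x ∈ Set.Ioi 0) : 0 < h x := hgc.pos_of_map_one_pos hnn h1 hx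
  have hPA : 0 < prodLarge A k := prodLarge_pos hA k
  have hPB : 0 < prodSmall B k := prodSmall_pos hB k
  obtain ⟨V, hV, hVA⟩ := exists_compressionDet_sqrtM_mul_mul_eq hA.posSemidef hkn
  set C := invSqrtM A * B * invSqrtM A
  have hC : C.PosDef := posDef_invSqrtM_mul_mul hA hB
  have hratio : prodSmall B k / prodLarge A k ≤ (compressionDet V C⁻¹)⁻¹ := by
    rw [inv_invSqrtM_mul_mul hA, hVA, mul_inv, div_eq_inv_mul]
    gcongr
    exact le_inv_of_le_inv₀ (compressionDet_inv_pos hB hV) (compressionDet_inv_le hB hV)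
  have hD : 0 < compressionDet V (cfc h C) :=
    compressionDet_cfc_pos hC.1 hV fun j => hpos _ (hC.eigenvalues_pos j)
  have hkey := hgc.map_rpow_inv_compressionDet_inv_le hpos hmono hC hV
  rw [Fintype.card_fin] at hkey
  have hroot := Real.rpow_le_rpow (div_pos hPB hPA).le hratio (inv_nonneg.2 k.cast_nonneg)
  have hroot_pos := Real.rpow_pos_of_pos (div_pos hPB hPA) (k : ℝ)⁻¹
  calc prodLarge A k ^ (k : ℝ)⁻¹ * h (prodSmall B k ^ (k : ℝ)⁻¹ / prodLarge A k ^ (k : ℝ)⁻¹)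
      = prodLarge A k ^ (k : ℝ)⁻¹ * h ((prodSmall B k / prodLarge A k) ^ (k : ℝ)⁻¹) := by
        rw [Real.div_rpow hPB.le hPA.le]
    _ ≤ prodLarge A k ^ (k : ℝ)⁻¹ * compressionDet V (cfc h C) ^ (k : ℝ)⁻¹ := by
        gcongr
        exact (hmono hroot_pos (hroot_pos.trans_le hroot) hroot).trans hkey
    _ = (prodLarge A k * compressionDet V (cfc h C)) ^ (k : ℝ)⁻¹ :=
        (Real.mul_rpow hPA.le hD.le).symm
    _ ≤ prodLarge (opMean h A B) k ^ (k : ℝ)⁻¹ := by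
        gcongr
        rw [← hVA]
        exact compressionDet_le_prodLarge (posSemidef_opMean hnn hA hB) hV

theorem stmt_6 {n : ℕ} (h : ℝ → ℝ) (hnn : ∀ x : ℝ, 0 ≤ x → 0 ≤ h x)
    (hcont : ContinuousOn h (Set.Ici 0)) (h1 : h 1 = 1)
    (hopmono : ∀ (m : ℕ) (X Y : Matrix (Fin m) (Fin m) ℂ), X.PosSemidef →
      (Y - X).PosSemidef → (cfc h Y - cfc h X).PosSemidef)
    (hgconvex : ∀ x y : ℝ, 0 ≤ x → 0 ≤ y → h (Real.sqrt (x * y)) ≤ Real.sqrt (h x * h y))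
    (A B : Matrix (Fin n) (Fin n) ℂ) (hA : A.PosDef) (hB : B.PosDef)
    (k : ℕ) (hk1 : 1 ≤ k) (hkn : k ≤ n) :
    (prodLarge A k ^ ((k : ℝ)⁻¹)) *
        h ((prodSmall B k ^ ((k : ℝ)⁻¹)) / (prodLarge A k ^ ((k : ℝ)⁻¹)))
      ≤ prodLarge (opMean h A B) k ^ ((k : ℝ)⁻¹) := by
  exact stmt_6_general (fun x hx => hnn x hx.le) (one_pos.trans_eq h1.symm)
    ((monotoneOn_of_posSemidef_cfc_sub_cfc (hopmono 1)).mono Set.Ioi_subset_Ici_self)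
    (fun x hx y hy => hgconvex x y hx.le hy.le) hA hB hk1 hkn
end

section
/- Let α ∈ [0,1] and let A, B be positive definite n×n complex matrices. Then for every k = 1,…,n: (i) ((∏_{j=1}^k μ_j(A))^{1/k})^{1-α} ((∏_{j=n+1-k}^n μ_j(B))^{1/k})^{α} ≤ (∏_{j=1}^k μ_j(A #_α B))^{1/k} ≤ ((∏_{j=1}^k μ_j(A))^{1/k})^{1-α} ((∏_{j=1}^k μ_j(B))^{1/k})^{α}; and (ii) ((∏_{j=n+1-k}^n μ_j(A))^{1/k})^{1-α} ((∏_{j=1}^k μ_j(B))^{1/k})^{α} ≥ (∏_{j=n+1-k}^n μ_j(A #_α B))^{1/k} ≥ ((∏_{j=n+1-k}^n μ_j(A))^{1/k})^{1-α} ((∏_{j=n+1-k}^n μ_j(B))^{1/k})^{α}. -/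
open scoped ComplexOrder

/-!
The `k`-th compound `C_k` preserves products, adjoints and diagonal matrices, hence real powers of
positive matrices, so `C_k(A #_α B) = C_k(A) #_α C_k(B)`; moreover the extreme eigenvalues of
`C_k(A)` are the products of the `k` largest and of the `k` smallest eigenvalues of `A`. This
reduces the four inequalities to the case `k = 1`. There, `A #_α B` is monotone in `B`, so `B` may
be replaced by the scalars `q` bounding it, and `A #_α q = q ^ α A ^ (1 - α)`.
-/

open scoped MatrixOrder Matrix.Norms.L2Operator
open Matrix
open Set.powersetCard (ofFinEmbEquiv)

section Compound

variable {I R : Type*} [LinearOrder I] [Fintype I] [CommRing R]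

theorem toMatrix_exteriorPower_map_apply {k : ℕ} (A : Matrix I I R) (s t : Set.powersetCard I k) :
    LinearMap.toMatrix ((Pi.basisFun R I).exteriorPower k) ((Pi.basisFun R I).exteriorPower k)
        (exteriorPower.map k (toLin' A)) s t =
      (A.submatrix (ofFinEmbEquiv.symm s) (ofFinEmbEquiv.symm t)).det := by
  rw [LinearMap.toMatrix_apply, exteriorPower.basis_apply,
    exteriorPower.map_apply_ιMulti_family, exteriorPower.basis_repr_apply,
    exteriorPower.ιMulti_family, exteriorPower.ιMultiDual_apply_ιMulti, ← det_transpose]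
  congr 1
  ext i j
  simp

/-- The `k`-th compound matrix, whose entries are the `k × k` minors, as a map preserving products
and adjoints. It is encoded as the matrix of `⋀^k A` in the standard basis, indexed by the
`k`-element subsets of `I`. -/
noncomputable def compound [StarRing R] (k : ℕ) :
    Matrix I I R →⋆* Matrix (Set.powersetCard I k) (Set.powersetCard I k) R where
  toFun A := LinearMap.toMatrix ((Pi.basisFun R I).exteriorPower k)
    ((Pi.basisFun R I).exteriorPower k) (exteriorPower.map k (toLin' A))
  map_one' := by rw [toLin'_one, exteriorPower.map_id, LinearMap.toMatrix_id]
  map_mul' A B := by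
    rw [toLin'_mul, exteriorPower.map_comp,
      LinearMap.toMatrix_comp _ ((Pi.basisFun R I).exteriorPower k)]
  map_star' A := by
    ext s t
    rw [star_apply, toMatrix_exteriorPower_map_apply, toMatrix_exteriorPower_map_apply,
      star_eq_conjTranspose, ← conjTranspose_submatrix, det_conjTranspose]

theorem compound_apply [StarRing R] {k : ℕ} (A : Matrix I I R) (s t : Set.powersetCard I k) :
    compound k A s t = (A.submatrix (ofFinEmbEquiv.symm s) (ofFinEmbEquiv.symm t)).det :=
  toMatrix_exteriorPower_map_apply A s t

theorem compound_diagonal [StarRing R] (k : ℕ) (d : I → R) :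
    compound k (diagonal d) =
      diagonal fun s : Set.powersetCard I k => ∏ i ∈ (s : Finset I), d i := by
  ext s t
  rw [compound_apply]
  obtain rfl | hst := eq_or_ne s t
  · rw [submatrix_diagonal _ _ (ofFinEmbEquiv.symm s).injective, det_diagonal, diagonal_apply_eq,
      ← Finset.prod_coe_sort (s : Finset I) d,
      ← Equiv.prod_comp (Finset.orderIsoOfFin _ s.2).toEquiv]
    rfl
  · obtain ⟨i, his, hit⟩ := (Set.powersetCard.exists_mem_notMem_iff_ne s t).mp hst
    obtain ⟨j, rfl⟩ := (Set.powersetCard.mem_range_ofFinEmbEquiv_symm_iff_mem s i).mpr his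
    rw [diagonal_apply_ne _ hst]
    refine det_eq_zero_of_row_eq_zero j fun l => diagonal_apply_ne _ fun h => hit ?_
    exact (Set.powersetCard.mem_range_ofFinEmbEquiv_symm_iff_mem t _).mp ⟨l, h.symm⟩

end Compound

section Spectral

variable {N : Type*} [Fintype N] [DecidableEq N]

theorem cfc_diagonal_ofReal (f : ℝ → ℝ) (d : N → ℝ) :
    cfc f (diagonal fun i => (d i : ℂ)) = diagonal fun i => (f (d i) : ℂ) := by
  let φ : (N → ℂ) →⋆ₐ[ℝ] Matrix N N ℂ :=
    { diagonalAlgHom ℝ with map_star' := fun x => (diagonal_conjTranspose x).symm }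
  have : ContinuousFunctionalCalculus ℝ (N → ℂ) IsSelfAdjoint :=
    IsSelfAdjoint.instContinuousFunctionalCalculus
  have hdi (i : N) : IsSelfAdjoint (d i : ℂ) := Complex.conj_ofReal (d i)
  have hd : IsSelfAdjoint fun i => (d i : ℂ) := funext hdi
  have hf : ContinuousOn f (⋃ i, spectrum ℝ (d i : ℂ)) := by
    refine (Set.finite_iUnion fun i => ?_).continuousOn f
    exact spectrum.scalar_eq (A := ℂ) (d i) ▸ Set.finite_singleton (d i)
  calc cfc f (φ fun i => (d i : ℂ)) = φ (cfc f fun i => (d i : ℂ)) :=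
        (φ.map_cfc f _ (by rwa [Pi.spectrum_eq]) continuous_id.matrix_diagonal hd (hd.map φ)).symm
    _ = φ fun i => (f (d i) : ℂ) := by
        rw [cfc_map_pi (S := ℝ) f _ hf hd hdi]
        congr! 2 with i
        exact cfc_algebraMap _ _

theorem cfc_conjStarAlgAut_diagonal (u : unitary (Matrix N N ℂ)) (f : ℝ → ℝ) (d : N → ℝ) :
    cfc f (Unitary.conjStarAlgAut ℂ _ u (diagonal fun i => (d i : ℂ))) =
      Unitary.conjStarAlgAut ℂ _ u (diagonal fun i => (f (d i) : ℂ)) := by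
  have hd : IsSelfAdjoint (diagonal fun i => (d i : ℂ)) :=
    isHermitian_diagonal_iff.mpr fun i => Complex.conj_ofReal (d i)
  rw [← cfc_diagonal_ofReal f]
  refine (StarAlgHomClass.map_cfc (Unitary.conjStarAlgAut ℂ (Matrix N N ℂ) u) f _ ?_ ?_ hd
    (hd.map _)).symm
  · exact finite_real_spectrum.continuousOn f
  · exact (continuous_const.mul continuous_id).mul continuous_const

theorem spectrum_conjStarAlgAut_diagonal (u : unitary (Matrix N N ℂ)) (d : N → ℝ) :
    spectrum ℝ (Unitary.conjStarAlgAut ℂ _ u (diagonal fun i => (d i : ℂ))) = Set.range d := by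
  ext x
  rw [← spectrum.algebraMap_mem_iff ℂ]
  simp

end Spectral

section CompoundSpectral

variable {I : Type*} [LinearOrder I] [Fintype I] (k : ℕ) {A : Matrix I I ℂ}

theorem compound_conjStarAlgAut_diagonal (u : unitary (Matrix I I ℂ)) (d : I → ℝ) :
    compound k (Unitary.conjStarAlgAut ℂ _ u (diagonal fun i => (d i : ℂ))) =
      Unitary.conjStarAlgAut ℂ _ (Unitary.map (compound k) u)
        (diagonal fun s : Set.powersetCard I k => ((∏ i ∈ (s : Finset I), d i : ℝ) : ℂ)) := by
  simp only [Unitary.conjStarAlgAut_apply, map_mul, map_star, compound_diagonal, Unitary.coe_map,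
    Complex.ofReal_prod]

theorem spectrum_compound (hA : A.IsHermitian) :
    spectrum ℝ (compound k A) =
      Set.range fun s : Set.powersetCard I k => ∏ i ∈ (s : Finset I), hA.eigenvalues i := by
  rw [← spectrum_conjStarAlgAut_diagonal, ← compound_conjStarAlgAut_diagonal k]
  exact congrArg _ (congrArg _ hA.spectral_theorem)

theorem compound_nonneg (hA : 0 ≤ A) : 0 ≤ compound k A := by
  obtain ⟨X, rfl⟩ := CStarAlgebra.nonneg_iff_eq_star_mul_self.mp hA
  rw [map_mul, map_star]
  exact star_mul_self_nonneg _

theorem isStrictlyPositive_compound (hA : IsStrictlyPositive A) :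
    IsStrictlyPositive (compound k A) :=
  IsStrictlyPositive.iff_of_unital.mpr ⟨compound_nonneg k hA.nonneg, hA.isUnit.map _⟩

theorem compound_rpow (hA : 0 ≤ A) (r : ℝ) : compound k (A ^ r) = compound k A ^ r := by
  have hA' := nonneg_iff_posSemidef.mp hA
  have h : A = Unitary.conjStarAlgAut ℂ _ hA'.1.eigenvectorUnitary
    (diagonal fun i => (hA'.1.eigenvalues i : ℂ)) := hA'.1.spectral_theorem
  rw [CFC.rpow_eq_cfc_real hA, CFC.rpow_eq_cfc_real (compound_nonneg k hA), h,
    cfc_conjStarAlgAut_diagonal, compound_conjStarAlgAut_diagonal,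
    compound_conjStarAlgAut_diagonal, cfc_conjStarAlgAut_diagonal]
  simp only [Real.finsetProd_rpow _ _ fun i _ => hA'.eigenvalues_nonneg i]

end CompoundSpectral

section WeightedGeomMean

variable {𝒜 : Type*} [CStarAlgebra 𝒜] [PartialOrder 𝒜] [StarOrderedRing 𝒜]

theorem smul_rpow {a : 𝒜} {q t : ℝ} (hq : 0 ≤ q) (ht : 0 ≤ t) (ha : 0 ≤ a) :
    (q • a) ^ t = q ^ t • a ^ t := by
  have hcont := Real.continuous_rpow_const ht
  rw [CFC.rpow_eq_cfc_real (smul_nonneg hq ha), CFC.rpow_eq_cfc_real ha,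
    ← cfc_comp_const_mul q _ a hcont.continuousOn, ← cfc_const_mul _ _ a hcont.continuousOn]
  exact cfc_congr fun x hx => Real.mul_rpow hq (spectrum_nonneg_of_nonneg ha hx)

/-- The weighted geometric mean `a #_t b` of elements of a C⋆-algebra, for strictly positive `a` and
nonnegative `b`. Powers are taken in the continuous functional calculus, so `a ^ (-2⁻¹)` is the
inverse square root of `a`. -/
noncomputable def weightedGeomMean (t : ℝ) (a b : 𝒜) : 𝒜 :=
  a ^ (2⁻¹ : ℝ) * (a ^ (-2⁻¹ : ℝ) * b * a ^ (-2⁻¹ : ℝ)) ^ t * a ^ (2⁻¹ : ℝ)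

namespace weightedGeomMean

variable {a : 𝒜} {t q r : ℝ}

theorem nonneg (t : ℝ) (a b : 𝒜) : 0 ≤ weightedGeomMean t a b :=
  CFC.rpow_nonneg.isSelfAdjoint.conjugate_nonneg CFC.rpow_nonneg

theorem mono_right (ht : t ∈ Set.Icc 0 1) (a : 𝒜) : Monotone (weightedGeomMean t a) :=
  fun _ _ hbc => CFC.rpow_nonneg.isSelfAdjoint.conjugate_le_conjugate <|
    CFC.rpow_le_rpow ht <| CFC.rpow_nonneg.isSelfAdjoint.conjugate_le_conjugate hbc

theorem algebraMap_right (hq : 0 ≤ q) (ht : 0 ≤ t) (ha : IsStrictlyPositive a) :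
    weightedGeomMean t a (algebraMap ℝ 𝒜 q) = q ^ t • a ^ (1 - t) := by
  have hconj : a ^ (-2⁻¹ : ℝ) * algebraMap ℝ 𝒜 q * a ^ (-2⁻¹ : ℝ) = q • a ^ (-1 : ℝ) := by
    rw [Algebra.algebraMap_eq_smul_one, mul_smul_one, smul_mul_assoc, ← CFC.rpow_add ha.isUnit]
    norm_num
  calc weightedGeomMean t a (algebraMap ℝ 𝒜 q)
      = a ^ (2⁻¹ : ℝ) * (q ^ t • a ^ (-t)) * a ^ (2⁻¹ : ℝ) := by
        rw [weightedGeomMean, hconj, smul_rpow hq ht CFC.rpow_nonneg,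
          CFC.rpow_rpow a _ _ (by norm_num) ha, neg_one_mul]
    _ = q ^ t • a ^ (1 - t) := by
        rw [mul_smul_comm, smul_mul_assoc, ← CFC.rpow_add ha.isUnit, ← CFC.rpow_add ha.isUnit]
        ring_nf

theorem algebraMap_right_eq_cfc (ht : t ∈ Set.Icc 0 1) (hq : 0 ≤ q) (ha : IsStrictlyPositive a) :
    weightedGeomMean t a (algebraMap ℝ 𝒜 q) = cfc (fun x => x ^ (1 - t) * q ^ t) a := by
  have hcont := Real.continuous_rpow_const (sub_nonneg.mpr ht.2)
  simp only [mul_comm _ (q ^ t)]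
  rw [algebraMap_right hq ht.1 ha, CFC.rpow_eq_cfc_real ha.nonneg,
    cfc_const_mul _ _ a hcont.continuousOn]

theorem algebraMap_right_le_algebraMap_iff (ht : t ∈ Set.Icc 0 1) (hq : 0 ≤ q)
    (ha : IsStrictlyPositive a) :
    weightedGeomMean t a (algebraMap ℝ 𝒜 q) ≤ algebraMap ℝ 𝒜 r ↔
      ∀ x ∈ spectrum ℝ a, x ^ (1 - t) * q ^ t ≤ r := by
  have hcont := Real.continuous_rpow_const (sub_nonneg.mpr ht.2)
  rw [algebraMap_right_eq_cfc ht hq ha]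
  exact cfc_le_algebraMap_iff _ _ a

theorem algebraMap_le_algebraMap_right_iff (ht : t ∈ Set.Icc 0 1) (hq : 0 ≤ q)
    (ha : IsStrictlyPositive a) :
    algebraMap ℝ 𝒜 r ≤ weightedGeomMean t a (algebraMap ℝ 𝒜 q) ↔
      ∀ x ∈ spectrum ℝ a, r ≤ x ^ (1 - t) * q ^ t := by
  have hcont := Real.continuous_rpow_const (sub_nonneg.mpr ht.2)
  rw [algebraMap_right_eq_cfc ht hq ha]
  exact algebraMap_le_cfc_iff _ _ a

end weightedGeomMean

end WeightedGeomMean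

section ExtremalProducts

section InitialEntries

variable {ι : Type*} {k n : ℕ}

/-- The `k`-element set of the first `k` entries of the enumeration `σ`; the extremal products are
attained there when `σ` sorts the factors. -/
def initialEntries (hkn : k ≤ n) (σ : Fin n ≃ ι) : Set.powersetCard ι k :=
  ⟨({i | (i : ℕ) < k} : Finset (Fin n)).map σ.toEmbedding, by
    simpa [Set.powersetCard, Fin.card_filter_val_lt]⟩

theorem prod_initialEntries {M : Type*} [CommMonoid M] (hkn : k ≤ n) (σ : Fin n ≃ ι) (f : ι → M) :
    ∏ i ∈ (initialEntries hkn σ : Finset ι), f i = ∏ i ∈ {i : Fin n | (i : ℕ) < k}, f (σ i) :=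
  Finset.prod_map _ _ _

theorem apply_mem_initialEntries (hkn : k ≤ n) (σ : Fin n ≃ ι) (i : Fin n) :
    σ i ∈ (initialEntries hkn σ : Finset ι) ↔ (i : ℕ) < k := by
  simp [initialEntries]

end InitialEntries

variable {ι R : Type*} [CommSemiring R] [PartialOrder R] [IsOrderedRing R] {f : ι → R} {k n : ℕ}

theorem prod_le_prod_of_card_eq {s t : Finset ι} (hst : s.card = t.card) (hf : ∀ i ∈ s, 0 ≤ f i)
    (h : ∀ i ∈ s, i ∉ t → ∀ j ∈ t, j ∉ s → f i ≤ f j) : ∏ i ∈ s, f i ≤ ∏ j ∈ t, f j := by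
  classical
  let e := Finset.equivOfCardEq (Finset.card_sdiff_comm hst)
  have hsdiff : ∏ i ∈ s \ t, f i ≤ ∏ j ∈ t \ s, f j := by
    rw [← Finset.prod_coe_sort, ← Finset.prod_coe_sort (t \ s), ← e.prod_comp]
    have hi (i : ↥(s \ t)) := Finset.mem_sdiff.mp i.2
    have hj (i : ↥(s \ t)) := Finset.mem_sdiff.mp (e i).2
    refine Finset.prod_le_prod (fun i _ => hf i (hi i).1) fun i _ => ?_
    exact h i (hi i).1 (hi i).2 (e i) (hj i).1 (hj i).2
  rw [← Finset.prod_inter_mul_prod_sdiff s t, ← Finset.prod_inter_mul_prod_sdiff t s,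
    Finset.inter_comm t s]
  exact mul_le_mul_of_nonneg_left hsdiff
    (Finset.prod_nonneg fun i hi => hf i (Finset.mem_inter.mp hi).1)

theorem isLeast_range_prod (hkn : k ≤ n) (hf : ∀ i, 0 ≤ f i) (σ : Fin n ≃ ι)
    (hσ : Monotone (f ∘ σ)) :
    IsLeast (Set.range fun s : Set.powersetCard ι k => ∏ i ∈ (s : Finset ι), f i)
      (∏ i ∈ {i : Fin n | (i : ℕ) < k}, f (σ i)) := by
  rw [← prod_initialEntries hkn]
  refine ⟨Set.mem_range_self _, Set.forall_mem_range.mpr fun s => ?_⟩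
  refine prod_le_prod_of_card_eq ((initialEntries hkn σ).2.trans s.2.symm) (fun i _ => hf i) ?_
  simp only [σ.surjective.forall, apply_mem_initialEntries]
  exact fun i hi _ j _ hj => hσ (hi.trans_le (not_lt.mp hj)).le

theorem isGreatest_range_prod (hkn : k ≤ n) (hf : ∀ i, 0 ≤ f i) (σ : Fin n ≃ ι)
    (hσ : Antitone (f ∘ σ)) :
    IsGreatest (Set.range fun s : Set.powersetCard ι k => ∏ i ∈ (s : Finset ι), f i)
      (∏ i ∈ {i : Fin n | (i : ℕ) < k}, f (σ i)) := by
  rw [← prod_initialEntries hkn]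
  refine ⟨Set.mem_range_self _, Set.forall_mem_range.mpr fun s => ?_⟩
  refine prod_le_prod_of_card_eq (s.2.trans (initialEntries hkn σ).2.symm) (fun i _ => hf i) ?_
  simp only [σ.surjective.forall, apply_mem_initialEntries]
  exact fun i _ hi j hj _ => hσ (hj.trans_le (not_lt.mp hi)).le

end ExtremalProducts

section ProdSmallProdLarge

variable {n k : ℕ} {A : Matrix (Fin n) (Fin n) ℂ} {r : ℝ}

theorem isLeast_prodSmall (hA : 0 ≤ A) (hkn : k ≤ n) :
    IsLeast (spectrum ℝ (compound k A)) (prodSmall A k) := by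
  have hA' := nonneg_iff_posSemidef.mp hA
  rw [spectrum_compound k hA'.1, prodSmall, dif_pos hA'.1]
  exact isLeast_range_prod hkn hA'.eigenvalues_nonneg _ (Tuple.monotone_sort _)

theorem isGreatest_prodLarge (hA : 0 ≤ A) (hkn : k ≤ n) :
    IsGreatest (spectrum ℝ (compound k A)) (prodLarge A k) := by
  have hA' := nonneg_iff_posSemidef.mp hA
  rw [spectrum_compound k hA'.1, prodLarge, dif_pos hA'.1]
  exact isGreatest_range_prod hkn hA'.eigenvalues_nonneg (Fin.revPerm.trans (Tuple.sort _))
    ((Tuple.monotone_sort hA'.1.eigenvalues).comp_antitone Fin.rev_anti)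

theorem prodSmall_nonneg (hA : 0 ≤ A) (hkn : k ≤ n) : 0 ≤ prodSmall A k :=
  spectrum_nonneg_of_nonneg (compound_nonneg k hA) (isLeast_prodSmall hA hkn).1

theorem prodLarge_nonneg (hA : 0 ≤ A) (hkn : k ≤ n) : 0 ≤ prodLarge A k :=
  spectrum_nonneg_of_nonneg (compound_nonneg k hA) (isGreatest_prodLarge hA hkn).1

theorem prodLarge_le_iff (hA : 0 ≤ A) (hkn : k ≤ n) :
    prodLarge A k ≤ r ↔ compound k A ≤ algebraMap ℝ _ r := by
  rw [le_algebraMap_iff_spectrum_le (compound_nonneg k hA).isSelfAdjoint]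
  exact isLUB_le_iff (isGreatest_prodLarge hA hkn).isLUB

theorem le_prodSmall_iff (hA : 0 ≤ A) (hkn : k ≤ n) :
    r ≤ prodSmall A k ↔ algebraMap ℝ _ r ≤ compound k A := by
  rw [algebraMap_le_iff_le_spectrum (compound_nonneg k hA).isSelfAdjoint]
  exact le_isGLB_iff (isLeast_prodSmall hA hkn).isGLB

end ProdSmallProdLarge

theorem compound_weightedGeomMean {I : Type*} [LinearOrder I] [Fintype I] {A B : Matrix I I ℂ}
    (hA : 0 ≤ A) (hB : 0 ≤ B) (k : ℕ) (t : ℝ) :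
    compound k (weightedGeomMean t A B) =
      weightedGeomMean t (compound k A) (compound k B) := by
  have hconj : 0 ≤ A ^ (-2⁻¹ : ℝ) * B * A ^ (-2⁻¹ : ℝ) :=
    CFC.rpow_nonneg.isSelfAdjoint.conjugate_nonneg hB
  simp only [weightedGeomMean, map_mul, compound_rpow _ hconj, compound_rpow _ hA]

section Sharp

variable {n k : ℕ} {A B : Matrix (Fin n) (Fin n) ℂ} {α : ℝ}

theorem sqrtM_eq_rpow (hA : 0 ≤ A) : sqrtM A = A ^ (2⁻¹ : ℝ) := by
  rw [sqrtM, CFC.rpow_eq_cfc_real hA]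
  simp only [← one_div, ← Real.sqrt_eq_rpow]

theorem invSqrtM_eq_rpow (hA : 0 ≤ A) : invSqrtM A = A ^ (-2⁻¹ : ℝ) := by
  rw [invSqrtM, CFC.rpow_eq_cfc_real hA]
  refine cfc_congr fun x hx => ?_
  simp only [Real.rpow_neg (spectrum_nonneg_of_nonneg hA hx), Real.sqrt_eq_rpow, one_div]

theorem sharp_eq_weightedGeomMean (hA : 0 ≤ A) (hB : 0 ≤ B) (α : ℝ) :
    sharp α A B = weightedGeomMean α A B := by
  rw [sharp, weightedGeomMean, sqrtM_eq_rpow hA, invSqrtM_eq_rpow hA,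
    CFC.rpow_eq_cfc_real (CFC.rpow_nonneg.isSelfAdjoint.conjugate_nonneg hB)]

theorem sharp_nonneg (hA : 0 ≤ A) (hB : 0 ≤ B) : 0 ≤ sharp α A B :=
  sharp_eq_weightedGeomMean hA hB α ▸ weightedGeomMean.nonneg α A B

theorem compound_sharp (hA : 0 ≤ A) (hB : 0 ≤ B) (k : ℕ) :
    compound k (sharp α A B) = weightedGeomMean α (compound k A) (compound k B) := by
  rw [sharp_eq_weightedGeomMean hA hB, compound_weightedGeomMean hA hB]

theorem compound_sharp_le (hα : α ∈ Set.Icc 0 1) (hA : 0 ≤ A) (hB : 0 ≤ B) (hkn : k ≤ n) :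
    compound k (sharp α A B) ≤
      weightedGeomMean α (compound k A) (algebraMap ℝ _ (prodLarge B k)) := by
  rw [compound_sharp hA hB]
  exact weightedGeomMean.mono_right hα _ ((prodLarge_le_iff hB hkn).mp le_rfl)

theorem le_compound_sharp (hα : α ∈ Set.Icc 0 1) (hA : 0 ≤ A) (hB : 0 ≤ B) (hkn : k ≤ n) :
    weightedGeomMean α (compound k A) (algebraMap ℝ _ (prodSmall B k)) ≤
      compound k (sharp α A B) := by
  rw [compound_sharp hA hB]
  exact weightedGeomMean.mono_right hα _ ((le_prodSmall_iff hB hkn).mp le_rfl)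

theorem prodLarge_sharp_le (hα : α ∈ Set.Icc 0 1) (hA : IsStrictlyPositive A) (hB : 0 ≤ B)
    (hkn : k ≤ n) :
    prodLarge (sharp α A B) k ≤ prodLarge A k ^ (1 - α) * prodLarge B k ^ α := by
  have hq := prodLarge_nonneg hB hkn
  refine (prodLarge_le_iff (sharp_nonneg hA.nonneg hB) hkn).mpr <|
    (compound_sharp_le hα hA.nonneg hB hkn).trans <|
    (weightedGeomMean.algebraMap_right_le_algebraMap_iff hα hq
      (isStrictlyPositive_compound k hA)).mpr fun x hx => ?_
  have hx0 : 0 ≤ x := spectrum_nonneg_of_nonneg (compound_nonneg k hA.nonneg) hx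
  gcongr
  · exact sub_nonneg.mpr hα.2
  · exact (isGreatest_prodLarge hA.nonneg hkn).2 hx

theorem le_prodLarge_sharp (hα : α ∈ Set.Icc 0 1) (hA : IsStrictlyPositive A) (hB : 0 ≤ B)
    (hkn : k ≤ n) :
    prodLarge A k ^ (1 - α) * prodSmall B k ^ α ≤ prodLarge (sharp α A B) k := by
  have hle := (le_compound_sharp hα hA.nonneg hB hkn).trans
    ((prodLarge_le_iff (sharp_nonneg hA.nonneg hB) hkn).mp le_rfl)
  exact (weightedGeomMean.algebraMap_right_le_algebraMap_iff hα (prodSmall_nonneg hB hkn)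
    (isStrictlyPositive_compound k hA)).mp hle _ (isGreatest_prodLarge hA.nonneg hkn).1

theorem prodSmall_sharp_le (hα : α ∈ Set.Icc 0 1) (hA : IsStrictlyPositive A) (hB : 0 ≤ B)
    (hkn : k ≤ n) :
    prodSmall (sharp α A B) k ≤ prodSmall A k ^ (1 - α) * prodLarge B k ^ α := by
  have hle := ((le_prodSmall_iff (sharp_nonneg hA.nonneg hB) hkn).mp le_rfl).trans
    (compound_sharp_le hα hA.nonneg hB hkn)
  exact (weightedGeomMean.algebraMap_le_algebraMap_right_iff hα (prodLarge_nonneg hB hkn)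
    (isStrictlyPositive_compound k hA)).mp hle _ (isLeast_prodSmall hA.nonneg hkn).1

theorem le_prodSmall_sharp (hα : α ∈ Set.Icc 0 1) (hA : IsStrictlyPositive A) (hB : 0 ≤ B)
    (hkn : k ≤ n) :
    prodSmall A k ^ (1 - α) * prodSmall B k ^ α ≤ prodSmall (sharp α A B) k := by
  have hp := prodSmall_nonneg hA.nonneg hkn
  have hq := prodSmall_nonneg hB hkn
  refine (le_prodSmall_iff (sharp_nonneg hA.nonneg hB) hkn).mpr <| le_trans
    ((weightedGeomMean.algebraMap_le_algebraMap_right_iff hα hq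
      (isStrictlyPositive_compound k hA)).mpr fun x hx => ?_) <|
    le_compound_sharp hα hA.nonneg hB hkn
  gcongr
  · exact sub_nonneg.mpr hα.2
  · exact (isLeast_prodSmall hA.nonneg hkn).2 hx

end Sharp

theorem rpow_rpow_mul_rpow_rpow {a b : ℝ} (ha : 0 ≤ a) (hb : 0 ≤ b) (p s t : ℝ) :
    (a ^ p) ^ s * (b ^ p) ^ t = (a ^ s * b ^ t) ^ p := by
  rw [Real.mul_rpow (by positivity) (by positivity), ← Real.rpow_mul ha, ← Real.rpow_mul ha,
    ← Real.rpow_mul hb, ← Real.rpow_mul hb, mul_comm p s, mul_comm p t]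

theorem stmt_9_general {n k : ℕ} {α p : ℝ} (hα : α ∈ Set.Icc 0 1) (hp : 0 ≤ p)
    {A B : Matrix (Fin n) (Fin n) ℂ} (hA : A.PosDef) (hB : B.PosSemidef) (hkn : k ≤ n) :
    ((prodLarge A k ^ p) ^ (1 - α) * (prodSmall B k ^ p) ^ α ≤ prodLarge (sharp α A B) k ^ p ∧
      prodLarge (sharp α A B) k ^ p ≤ (prodLarge A k ^ p) ^ (1 - α) * (prodLarge B k ^ p) ^ α) ∧
    (prodSmall (sharp α A B) k ^ p ≤ (prodSmall A k ^ p) ^ (1 - α) * (prodLarge B k ^ p) ^ α ∧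
      (prodSmall A k ^ p) ^ (1 - α) * (prodSmall B k ^ p) ^ α ≤
        prodSmall (sharp α A B) k ^ p) := by
  have hA' := isStrictlyPositive_iff_posDef.mpr hA
  have hG : 0 ≤ sharp α A B := sharp_nonneg hA'.nonneg hB.nonneg
  have hAS := prodSmall_nonneg hA'.nonneg hkn
  have hAL := prodLarge_nonneg hA'.nonneg hkn
  have hBS := prodSmall_nonneg hB.nonneg hkn
  have hBL := prodLarge_nonneg hB.nonneg hkn
  have hGS := prodSmall_nonneg hG hkn
  have hGL := prodLarge_nonneg hG hkn
  simp only [rpow_rpow_mul_rpow_rpow, *]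
  refine ⟨⟨?_, ?_⟩, ?_, ?_⟩ <;> refine Real.rpow_le_rpow (by positivity) ?_ hp
  · exact le_prodLarge_sharp hα hA' hB.nonneg hkn
  · exact prodLarge_sharp_le hα hA' hB.nonneg hkn
  · exact prodSmall_sharp_le hα hA' hB.nonneg hkn
  · exact le_prodSmall_sharp hα hA' hB.nonneg hkn

theorem stmt_9 {n : ℕ} (α : ℝ) (hα0 : 0 ≤ α) (hα1 : α ≤ 1)
    (A B : Matrix (Fin n) (Fin n) ℂ) (hA : A.PosDef) (hB : B.PosDef)
    (k : ℕ) (hk1 : 1 ≤ k) (hkn : k ≤ n) :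
    ((prodLarge A k ^ ((k : ℝ)⁻¹)) ^ (1 - α) * (prodSmall B k ^ ((k : ℝ)⁻¹)) ^ α
        ≤ prodLarge (sharp α A B) k ^ ((k : ℝ)⁻¹) ∧
      prodLarge (sharp α A B) k ^ ((k : ℝ)⁻¹)
        ≤ (prodLarge A k ^ ((k : ℝ)⁻¹)) ^ (1 - α) * (prodLarge B k ^ ((k : ℝ)⁻¹)) ^ α) ∧
    (prodSmall (sharp α A B) k ^ ((k : ℝ)⁻¹)
        ≤ (prodSmall A k ^ ((k : ℝ)⁻¹)) ^ (1 - α) * (prodLarge B k ^ ((k : ℝ)⁻¹)) ^ α ∧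
      (prodSmall A k ^ ((k : ℝ)⁻¹)) ^ (1 - α) * (prodSmall B k ^ ((k : ℝ)⁻¹)) ^ α
        ≤ prodSmall (sharp α A B) k ^ ((k : ℝ)⁻¹)) :=
  stmt_9_general ⟨hα0, hα1⟩ (by positivity) hA hB.posSemidef hkn
end
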